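/- arXiv:1904.07007 — 2 statements merged into one kernel-verified Lean document; each statement's English description precedes it below -/
import Mathlib

section
/- Let β ∈ (1,2) be a multinacci number. Then the dimension bifurcation set coincides with the set-valued bifurcation set: B_β = E_β. -/
open Set Filter MeasureTheory

/-- The β-transformation `x ↦ βx (mod 1)`. -/
noncomputable def Tbeta (β x : ℝ) : ℝ := Int.fract (β * x)

/-- The survivor set `K_β(t) = {x ∈ [0,1) : T_β^n x ≥ t for all n ≥ 0}`. -/
def Kset (β t : ℝ) : Set ℝ := {x | x ∈ Set.Ico (0 : ℝ) 1 ∧ ∀ n : ℕ, t ≤ (Tbeta β)^[n] x}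

/-- Strict lexicographic order on sequences of naturals. -/
def seqLt (x y : ℕ → ℕ) : Prop := ∃ n, (∀ i, i < n → x i = y i) ∧ x n < y n

/-- Lexicographic order on sequences of naturals. -/
def seqLe (x y : ℕ → ℕ) : Prop := x = y ∨ seqLt x y

/-- The `n`-th iterate of the left shift. -/
def shiftN (n : ℕ) (x : ℕ → ℕ) : ℕ → ℕ := fun i => x (i + n)

/-- The sequence `w 0^∞`. -/
def wordSeq (w : List ℕ) : ℕ → ℕ := fun i => w.getD i 0

/-- The periodic sequence `w^∞`. -/
def perSeq (w : List ℕ) : ℕ → ℕ := fun i => w.getD (i % w.length) 0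

/-- The sequence obtained by concatenating the word `w` with the sequence `x`. -/
def catSeq (w : List ℕ) (x : ℕ → ℕ) : ℕ → ℕ :=
  fun i => if i < w.length then w.getD i 0 else x (i - w.length)

/-- The greedy β-expansion of `t`: the digit `b_{i+1}` is `⌊β T_β^i t⌋`. -/
noncomputable def greedy (β t : ℝ) : ℕ → ℕ := fun i => (⌊β * (Tbeta β)^[i] t⌋).toNat

/-- `d` is the quasi-greedy β-expansion of `1`: the lexicographically largest
sequence in `{0,1}^ℕ` not ending in `0^∞` whose digits sum to `1` in base `β`. -/
def IsQuasiGreedy (β : ℝ) (d : ℕ → ℕ) : Prop :=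
  (∀ i, d i ≤ 1) ∧ (¬ ∃ N, ∀ n, N ≤ n → d n = 0) ∧
  (∑' i : ℕ, (d i : ℝ) / β ^ (i + 1) = 1) ∧
  ∀ e : ℕ → ℕ, (∀ i, e i ≤ 1) → (¬ ∃ N, ∀ n, N ≤ n → e n = 0) →
    (∑' i : ℕ, (e i : ℝ) / β ^ (i + 1) = 1) → seqLe e d

/-- `s = s_1…s_p` is a β-Lyndon word: `s_{i+1}…s_p ≻ s_1…s_{p-i}` for `1 ≤ i < p`
and `σ^n(s^∞) ≺ δ(β)` for all `n ≥ 0`. -/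
def IsBetaLyndon (β : ℝ) (s : List ℕ) : Prop :=
  s ≠ [] ∧ (∀ a ∈ s, a ≤ 1) ∧
  (∀ i, 1 ≤ i → i < s.length →
    seqLt (wordSeq (s.take (s.length - i))) (wordSeq (s.drop i))) ∧
  (∀ d : ℕ → ℕ, IsQuasiGreedy β d → ∀ n : ℕ, seqLt (shiftN n (perSeq s)) d)

/-- Left endpoint `t_L = Σ_{i=1}^p s_i β^{-i}` of the β-Lyndon interval generated by `s`. -/
noncomputable def lyndonLeft (β : ℝ) (s : List ℕ) : ℝ :=
  ∑ i ∈ Finset.range s.length, (s.getD i 0 : ℝ) / β ^ (i + 1)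

/-- Right endpoint `t_R = (β^p/(β^p - 1)) t_L` of the β-Lyndon interval generated by `s`. -/
noncomputable def lyndonRight (β : ℝ) (s : List ℕ) : ℝ :=
  β ^ s.length / (β ^ s.length - 1) * lyndonLeft β s

/-- The union of all β-Lyndon intervals `[t_L, t_R)`. -/
noncomputable def lyndonUnionIco (β : ℝ) : Set ℝ :=
  ⋃ s ∈ {s : List ℕ | IsBetaLyndon β s}, Set.Ico (lyndonLeft β s) (lyndonRight β s)

/-- The symbolic survivor set `K̃_β(t)` with upper bound sequence `d = δ(β)`. -/
def Ktilde (β t : ℝ) (d : ℕ → ℕ) : Set (ℕ → ℕ) :=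
  {x | (∀ i, x i ≤ 1) ∧ ∀ n : ℕ, seqLe (greedy β t) (shiftN n x) ∧ seqLe (shiftN n x) d}

/-- The set-valued bifurcation set `E_β`. -/
def Eset (β : ℝ) : Set ℝ :=
  {t | t ∈ Set.Ico (0 : ℝ) 1 ∧ ∀ t', t < t' → t' < 1 → Kset β t' ≠ Kset β t}

/-- The dimension bifurcation set `B_β`. -/
def Bset (β : ℝ) : Set ℝ :=
  {t | t ∈ Set.Ico (0 : ℝ) 1 ∧ ∀ t', t < t' → t' < 1 → dimH (Kset β t') ≠ dimH (Kset β t)}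

/-- `β` is a multinacci number: `β^{m+1} = β^m + ⋯ + β + 1` for some `m ≥ 1`. -/
def IsMultinacci (β : ℝ) : Prop :=
  ∃ m : ℕ, 1 ≤ m ∧ β ^ (m + 1) = ∑ i ∈ Finset.range (m + 1), β ^ i

/-!
If `t ∈ E_β`, then `t ∈ K_β(t)` because `T_β` is continuous from the right; so it suffices to show
`dim K_β(t') < dim K_β(t)` whenever `t ∈ K_β(t)` and `t < t'`.

Write `s` for the dimension of `K_β(t')`. The number of itineraries is submultiplicative in the
length, so a covering argument yields at least `β^(s n)` itineraries of length `n` in `K_β(t')`.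
Because `β` is multinacci, the orbit of `1` is finite and `β⁻¹ + ⋯ + β⁻ʲ` are the endpoints of a
Markov partition; therefore a prefix and a suffix of bounded length turn every itinerary into a word
that can be concatenated freely, at the cost of lowering the threshold `t'` to some `τ ∈ (t, t')`.

As `t` is in `K_β(t)`, a long initial piece `U` of its expansion (suitably completed) is legal for
the threshold `t` but too small for `τ`. In a word `A U B` with `A`, `B` free for `τ` the position
of `U` is thus determined, and the `n + 1` choices of the position produce on the order of
`n β^(s n)` words of length `n + O(1)` that concatenate freely for the threshold `t`. For some `L`
there are hence more than `β^(s L)` such words of length `L`, and their infinite concatenations form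
a Cantor set in `K_β(t)` of dimension greater than `s`.
-/

section HausdorffDimension

open Real
open scoped NNReal ENNReal Topology

lemma abs_ofDigits_sub_le_of_separated {E : Type*} [PseudoMetricSpace E] {b c : ℝ}
    (hb : 1 < b) (hc : 0 < c) {M : ℕ} {X : (ℕ → Fin M) → E}
    (hX : ∀ k ω ω', (∀ i < k, ω i = ω' i) → ω k ≠ ω' k → c / b ^ k ≤ dist (X ω) (X ω'))
    (ω ω' : ℕ → Fin M) :
    |ofDigits ω - ofDigits ω'| ≤ c ^ (-logb b M) * dist (X ω) (X ω') ^ logb b M := by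
  have hM : (0 : ℝ) < M := by exact_mod_cast (ω 0).pos
  have hr : 0 ≤ logb b M := logb_nonneg hb (by exact_mod_cast (ω 0).pos)
  obtain rfl | hne := eq_or_ne ω ω'
  · simp only [sub_self, abs_zero]
    positivity
  set k := PiNat.firstDiff ω ω'
  have hk : ∀ i < k, ω i = ω' i := fun i hi => PiNat.apply_eq_of_lt_firstDiff hi
  calc |ofDigits ω - ofDigits ω'| ≤ ((M : ℝ) ^ k)⁻¹ := abs_ofDigits_sub_ofDigits_le hk
    _ = c ^ (-logb b M) * (c / b ^ k) ^ logb b M := by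
        rw [div_rpow hc.le (by positivity), ← rpow_pow_comm (by positivity),
          rpow_logb (by positivity) hb.ne' hM, rpow_neg hc.le]
        field_simp
    _ ≤ c ^ (-logb b M) * dist (X ω) (X ω') ^ logb b M := by
        gcongr
        exact hX k ω ω' hk (PiNat.apply_firstDiff_ne hne)

variable {E : Type*} [MetricSpace E]

lemma le_dimH_range_of_separated {b c : ℝ} (hb : 1 < b) (hc : 0 < c) {M : ℕ}
    {X : (ℕ → Fin M) → E}
    (hX : ∀ k ω ω', (∀ i < k, ω i = ω' i) → ω k ≠ ω' k → c / b ^ k ≤ dist (X ω) (X ω')) :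
    ENNReal.ofReal (logb b M) ≤ dimH (range X) := by
  obtain hM | hM := le_or_gt M 1
  · rw [ENNReal.ofReal_of_nonpos (logb_nonpos hb (by positivity) (by exact_mod_cast hM))]
    exact zero_le
  have hr : 0 < logb b M := logb_pos hb (by exact_mod_cast hM)
  have hXinj : Function.Injective X := fun ω ω' h => by
    by_contra hne
    have hsep := hX _ ω ω' (fun _ => PiNat.apply_eq_of_lt_firstDiff)
      (PiNat.apply_firstDiff_ne hne)
    rw [h, dist_self] at hsep
    have : 0 < c / b ^ PiNat.firstDiff ω ω' := by positivity
    linarith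
  obtain ⟨f, hf⟩ : ∃ f : E → ℝ, ∀ ω, f (X ω) = ofDigits ω :=
    ⟨Function.extend X ofDigits 0, hXinj.extend_apply _ _⟩
  have hHolder : HolderOnWith (c ^ (-logb b M)).toNNReal (logb b M).toNNReal
      f (range X) := by
    rintro _ ⟨ω, rfl⟩ _ ⟨ω', rfl⟩
    rw [hf, hf, edist_dist, edist_dist, Real.dist_eq, Real.coe_toNNReal _ hr.le,
      ENNReal.ofReal_rpow_of_nonneg dist_nonneg hr.le]
    change _ ≤ ENNReal.ofReal _ * _
    rw [← ENNReal.ofReal_mul (by positivity)]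
    exact ENNReal.ofReal_le_ofReal (abs_ofDigits_sub_le_of_separated hb hc hX ω ω')
  have hsurj : Icc (0 : ℝ) 1 ⊆ f '' range X := by
    intro y hy
    obtain ⟨ω, -, hω⟩ := ofDigits_SurjOn hM hy
    exact ⟨X ω, ⟨ω, rfl⟩, (hf ω).trans hω⟩
  have hdim : (1 : ℝ≥0∞) ≤ dimH (range X) / ENNReal.ofReal (logb b M) := by
    rw [← show dimH (Icc (0 : ℝ) 1) = 1 by rw [Real.dimH_of_nonempty_interior] <;> simp]
    exact (dimH_mono hsurj).trans (hHolder.dimH_image_le (by simpa using hr))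
  rw [ENNReal.le_div_iff_mul_le (by left; simpa using hr) (by left; simp)] at hdim
  simpa using hdim

lemma sum_rpow_logb_le_one {ι : Type*} [Fintype ι] {b : ℝ} (hb : 1 < b) {N p : ℕ} (hN : 0 < N)
    (hcard : Fintype.card ι ≤ N ^ p) {δ : ι → ℝ≥0∞} (hδ : ∀ i, δ i ≤ ENNReal.ofReal (b ^ p)⁻¹) :
    ∑ i, δ i ^ logb b N ≤ 1 := by
  have hd : 0 ≤ logb b N := logb_nonneg hb (by exact_mod_cast hN)
  calc ∑ i, δ i ^ logb b N ≤ ∑ _i : ι, ENNReal.ofReal (b ^ p)⁻¹ ^ logb b N := by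
        gcongr
        exact hδ _
    _ = ENNReal.ofReal (Fintype.card ι * ((N : ℝ) ^ p)⁻¹) := by
        rw [Finset.sum_const, Finset.card_univ, nsmul_eq_mul,
          ENNReal.ofReal_rpow_of_nonneg (by positivity) hd, inv_rpow (by positivity),
          ← rpow_pow_comm (by positivity),
          rpow_logb (by positivity) hb.ne' (by exact_mod_cast hN),
          ENNReal.ofReal_mul (by positivity), ENNReal.ofReal_natCast]
    _ ≤ 1 := by
        rw [ENNReal.ofReal_le_one, mul_inv_le_iff₀ (by positivity), one_mul]
        exact_mod_cast hcard

lemma dimH_le_of_code {α : Type*} {s : Set E} {b : ℝ} (hb : 1 < b) {N : ℕ}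
    (code : ℕ → E → α) (words : ℕ → Finset α) (hmaps : ∀ p, MapsTo (code p) s (words p))
    (hcard : ∀ p, (words p).card ≤ N ^ p)
    (hdist : ∀ p, ∀ x ∈ s, ∀ y ∈ s, code p x = code p y → dist x y ≤ (b ^ p)⁻¹) :
    dimH s ≤ ENNReal.ofReal (logb b N) := by
  obtain rfl | ⟨x, hx⟩ := s.eq_empty_or_nonempty
  · simp
  have hN : 0 < N := by
    simpa using (Finset.card_pos.mpr ⟨_, hmaps 1 hx⟩).trans_le (hcard 1)
  have hd : 0 ≤ logb b N := logb_nonneg hb (by exact_mod_cast hN)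
  borelize E
  let cylinder (p : ℕ) (w : words p) : Set E := {x ∈ s | code p x = w}
  have hdiam : ∀ p w, Metric.ediam (cylinder p w) ≤ ENNReal.ofReal (b ^ p)⁻¹ := by
    rintro p w
    refine Metric.ediam_le fun x ⟨hx, hxw⟩ y ⟨hy, hyw⟩ => ?_
    rw [edist_dist]
    exact ENNReal.ofReal_le_ofReal (hdist p x hx y hy (hxw.trans hyw.symm))
  have hlim : Tendsto (fun p : ℕ => ENNReal.ofReal (b ^ p)⁻¹) atTop (𝓝 0) := by
    simpa using ENNReal.tendsto_ofReal (tendsto_inv_atTop_zero.comp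
      (tendsto_pow_atTop_atTop_of_one_lt hb))
  have hsum : ∀ p, ∑ w, Metric.ediam (cylinder p w) ^ logb b N ≤ 1 := fun p =>
    sum_rpow_logb_le_one hb hN ((Fintype.card_coe _).trans_le (hcard p)) (hdiam p)
  have hmeasure : Measure.hausdorffMeasure (logb b N) s ≤ 1 :=
    calc Measure.hausdorffMeasure (logb b N) s
        ≤ liminf (fun p => ∑ w, Metric.ediam (cylinder p w) ^ logb b N) atTop :=
          Measure.hausdorffMeasure_le_liminf_sum _ s _ hlim cylinder (.of_forall hdiam)
            (.of_forall fun p x hx => mem_iUnion.mpr ⟨⟨code p x, hmaps p hx⟩, hx, rfl⟩)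
      _ ≤ liminf (fun _ : ℕ => (1 : ℝ≥0∞)) atTop := liminf_le_liminf (.of_forall hsum)
      _ = 1 := liminf_const 1
  refine dimH_le_of_hausdorffMeasure_ne_top (d := (logb b N).toNNReal) ?_
  rw [Real.coe_toNNReal _ hd]
  exact (hmeasure.trans_lt ENNReal.one_lt_top).ne

end HausdorffDimension

section WordMaps

/-- The inverse branch of `x ↦ βx (mod 1)` along the digits of `w`: for `w = w₁…wₙ` it is
`y ↦ ∑ wᵢ β⁻ⁱ + β⁻ⁿ y`. -/
noncomputable def wordMap (β : ℝ) (w : List Bool) (y : ℝ) : ℝ :=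
  w.foldr (fun b z => ((b.toNat : ℝ) + z) / β) y

/-- The partial sums `β⁻¹ + ⋯ + β⁻ʲ` of the expansion by ones. When `onesValue β (m + 1) = 1`
these are the endpoints of the Markov partition of the β-transformation. -/
noncomputable def onesValue (β : ℝ) (j : ℕ) : ℝ := wordMap β (List.replicate j true) 0

variable {β : ℝ}

@[simp]
lemma wordMap_nil (y : ℝ) : wordMap β [] y = y := rfl

@[simp]
lemma wordMap_cons (b : Bool) (w : List Bool) (y : ℝ) :
    wordMap β (b :: w) y = ((b.toNat : ℝ) + wordMap β w y) / β := rfl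

lemma wordMap_append (v w : List Bool) (y : ℝ) :
    wordMap β (v ++ w) y = wordMap β v (wordMap β w y) := List.foldr_append

lemma wordMap_eq_add (w : List Bool) (y : ℝ) :
    wordMap β w y = wordMap β w 0 + y / β ^ w.length := by
  induction w with
  | nil => simp
  | cons b w ih =>
    rw [wordMap_cons, ih, wordMap_cons, List.length_cons, pow_succ]
    ring

lemma wordMap_sub_wordMap (w : List Bool) (x y : ℝ) :
    wordMap β w x - wordMap β w y = (x - y) / β ^ w.length := by
  rw [wordMap_eq_add, wordMap_eq_add w y]
  ring

lemma wordMap_strictMono (hβ : 0 < β) (w : List Bool) : StrictMono (wordMap β w) := fun x y h => by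
  rw [wordMap_eq_add, wordMap_eq_add w y]
  gcongr

lemma wordMap_mono (hβ : 0 < β) (w : List Bool) : Monotone (wordMap β w) :=
  (wordMap_strictMono hβ w).monotone

lemma wordMap_nonneg (hβ : 0 < β) (w : List Bool) {y : ℝ} (hy : 0 ≤ y) : 0 ≤ wordMap β w y := by
  induction w with
  | nil => exact hy
  | cons b w ih => rw [wordMap_cons]; positivity

@[simp]
lemma onesValue_zero : onesValue β 0 = 0 := rfl

lemma onesValue_succ (j : ℕ) : onesValue β (j + 1) = (1 + onesValue β j) / β := by
  simp [onesValue, List.replicate_succ]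

lemma onesValue_one : onesValue β 1 = β⁻¹ := by simp [onesValue_succ]

lemma wordMap_replicate_onesValue (j k : ℕ) :
    wordMap β (List.replicate j true) (onesValue β k) = onesValue β (j + k) := by
  rw [onesValue, onesValue, List.replicate_add, wordMap_append]

lemma wordMap_replicate_inv (j : ℕ) :
    wordMap β (List.replicate j true) β⁻¹ = onesValue β (j + 1) := by
  rw [← onesValue_one, wordMap_replicate_onesValue]

lemma onesValue_strictMono (hβ : 0 < β) : StrictMono (onesValue β) :=
  strictMono_nat_of_lt_succ fun j => by
    rw [← wordMap_replicate_inv]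
    exact wordMap_strictMono hβ _ (inv_pos.mpr hβ)

lemma onesValue_succ_sub (j : ℕ) : onesValue β (j + 1) - onesValue β j = (β ^ (j + 1))⁻¹ := by
  rw [← wordMap_replicate_inv, onesValue, wordMap_sub_wordMap, List.length_replicate, pow_succ]
  ring

lemma onesValue_nonneg (hβ : 0 < β) (j : ℕ) : 0 ≤ onesValue β j :=
  wordMap_nonneg hβ _ le_rfl

lemma pow_mul_onesValue (hβ : β ≠ 0) (j : ℕ) :
    β ^ j * onesValue β j = ∑ i ∈ Finset.range j, β ^ i := by
  induction j with
  | zero => simp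
  | succ j ih =>
    rw [onesValue_succ, Finset.sum_range_succ, ← ih]
    field_simp
    ring

lemma IsMultinacci.exists_onesValue_eq_one (hβ : 0 < β) (h : IsMultinacci β) :
    ∃ m, onesValue β (m + 1) = 1 := by
  obtain ⟨m, -, hm⟩ := h
  refine ⟨m, ?_⟩
  rw [← pow_mul_onesValue hβ.ne'] at hm
  exact (mul_eq_left₀ (pow_pos hβ _).ne').mp hm.symm

lemma onesValue_eq_sub_one (hβ : 0 < β) {m : ℕ} (hm : onesValue β (m + 1) = 1) :
    onesValue β m = β - 1 := by
  rw [onesValue_succ, div_eq_one_iff_eq hβ.ne'] at hm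
  linarith

lemma lt_two_of_onesValue_eq_one (hβ : 0 < β) {m : ℕ} (hm : onesValue β (m + 1) = 1) : β < 2 := by
  have hlt := onesValue_strictMono hβ m.lt_succ_self
  rw [onesValue_eq_sub_one hβ hm, hm] at hlt
  linarith

lemma one_sub_inv_le_inv (hβ : 0 < β) {m : ℕ} (hm : onesValue β (m + 1) = 1) : 1 - β⁻¹ ≤ β⁻¹ := by
  linarith [inv_anti₀ hβ (lt_two_of_onesValue_eq_one hβ hm).le]

lemma exists_mem_Ico_onesValue {m : ℕ} (hm : onesValue β (m + 1) = 1) {x : ℝ}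
    (hx : x ∈ Ico (0 : ℝ) 1) : ∃ j ≤ m, x ∈ Ico (onesValue β j) (onesValue β (j + 1)) := by
  classical
  have hex : ∃ j, x < onesValue β (j + 1) := ⟨m, hm ▸ hx.2⟩
  refine ⟨Nat.find hex, Nat.find_min' hex (hm ▸ hx.2), ?_, Nat.find_spec hex⟩
  rcases hj : Nat.find hex with _ | j
  · exact hx.1
  · exact not_lt.mp (Nat.find_min hex (hj ▸ j.lt_succ_self))

end WordMaps

section Itineraries

/-- The first digit `⌊βx⌋` of the greedy expansion of `x ∈ [0,1)`, as a Boolean. -/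
noncomputable def digit (β x : ℝ) : Bool := decide (1 ≤ β * x)

/-- The first `n` digits of the greedy expansion of `x`. -/
noncomputable def itinerary (β : ℝ) (n : ℕ) (x : ℝ) : List Bool :=
  (List.iterate (Tbeta β) x n).map (digit β)

variable {β t x : ℝ}

lemma Tbeta_mem_Ico (β x : ℝ) : Tbeta β x ∈ Ico (0 : ℝ) 1 :=
  ⟨Int.fract_nonneg _, Int.fract_lt_one _⟩

lemma iterate_Tbeta_mem_Ico (hx : x ∈ Ico (0 : ℝ) 1) (n : ℕ) : (Tbeta β)^[n] x ∈ Ico (0 : ℝ) 1 :=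
  MapsTo.iterate (fun y _ => Tbeta_mem_Ico β y) n hx

lemma Tbeta_wordMap_cons (hβ : β ≠ 0) (b : Bool) {w : List Bool} {y : ℝ}
    (h : wordMap β w y ∈ Ico (0 : ℝ) 1) : Tbeta β (wordMap β (b :: w) y) = wordMap β w y := by
  rw [Tbeta, wordMap_cons, mul_div_cancel₀ _ hβ, Int.fract_natCast_add, Int.fract_eq_self.mpr h]

lemma digit_add_Tbeta_div (h0 : 0 < β) (h2 : β ≤ 2) (hx : x ∈ Ico (0 : ℝ) 1) :
    ((digit β x).toNat + Tbeta β x) / β = x := by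
  have hdigit : ⌊β * x⌋ = (digit β x).toNat := by
    by_cases h : 1 ≤ β * x
    · simp only [digit, h, decide_true, Bool.toNat_true, Int.floor_eq_iff]
      push_cast
      exact ⟨h, by nlinarith [hx.2]⟩
    · simp only [digit, h, decide_false, Bool.toNat_false, Int.floor_eq_iff]
      push_cast
      exact ⟨by nlinarith [hx.1], by linarith⟩
  rw [Tbeta, Int.fract, hdigit, Int.cast_natCast, add_sub_cancel, mul_div_cancel_left₀ _ h0.ne']

lemma Tbeta_mem_Kset (hx : x ∈ Kset β t) : Tbeta β x ∈ Kset β t :=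
  ⟨Tbeta_mem_Ico β x, fun n => hx.2 (n + 1)⟩

lemma iterate_Tbeta_mem_Kset (hx : x ∈ Kset β t) (n : ℕ) : (Tbeta β)^[n] x ∈ Kset β t :=
  MapsTo.iterate (fun _ => Tbeta_mem_Kset) n hx

lemma Kset_antitone : Antitone (Kset β) := fun _ _ h _ hx => ⟨hx.1, fun n => h.trans (hx.2 n)⟩

lemma subset_Kset_of_mapsTo {s : Set ℝ} (hs : s ⊆ Ico 0 1) (ht : ∀ x ∈ s, t ≤ x)
    (hmaps : MapsTo (Tbeta β) s s) : s ⊆ Kset β t :=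
  fun _ hx => ⟨hs hx, fun n => ht _ (hmaps.iterate n hx)⟩

@[simp]
lemma length_itinerary (n : ℕ) (x : ℝ) : (itinerary β n x).length = n := by
  simp [itinerary]

lemma itinerary_succ (n : ℕ) (x : ℝ) :
    itinerary β (n + 1) x = digit β x :: itinerary β n (Tbeta β x) := rfl

lemma itinerary_add (n k : ℕ) (x : ℝ) :
    itinerary β (n + k) x = itinerary β n x ++ itinerary β k ((Tbeta β)^[n] x) := by
  rw [itinerary, List.iterate_add, List.map_append, itinerary, itinerary]

lemma wordMap_itinerary (h0 : 0 < β) (h2 : β ≤ 2) (n : ℕ) (hx : x ∈ Ico (0 : ℝ) 1) :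
    wordMap β (itinerary β n x) ((Tbeta β)^[n] x) = x := by
  induction n generalizing x with
  | zero => rfl
  | succ n ih =>
    rw [itinerary_succ, wordMap_cons, Function.iterate_succ_apply, ih (Tbeta_mem_Ico β x),
      digit_add_Tbeta_div h0 h2 hx]

end Itineraries

section Admissible

/-- A word all of whose nonempty suffixes send `[0, β⁻¹]` into `[t, 1]`. -/
def Admissible (β t : ℝ) (w : List Bool) : Prop :=
  ∀ v ≠ [], v <:+ w → t ≤ wordMap β v 0 ∧ wordMap β v β⁻¹ ≤ 1

variable {β t t' : ℝ} {v w : List Bool}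

lemma admissible_nil : Admissible β t [] :=
  fun _ hne hv => absurd (List.suffix_nil.mp hv) hne

lemma admissible_cons {b : Bool} : Admissible β t (b :: w) ↔
    (t ≤ wordMap β (b :: w) 0 ∧ wordMap β (b :: w) β⁻¹ ≤ 1) ∧ Admissible β t w := by
  refine ⟨fun h => ⟨h _ (List.cons_ne_nil b w) List.suffix_rfl,
    fun v hne hv => h v hne (hv.trans (List.suffix_cons b w))⟩, fun ⟨hbw, hw⟩ v hne hv => ?_⟩
  obtain rfl | hv := List.suffix_cons_iff.mp hv
  · exact hbw
  · exact hw v hne hv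

lemma Admissible.mono (h : Admissible β t w) (ht : t' ≤ t) : Admissible β t' w :=
  fun v hne hv => (h v hne hv).imp_left ht.trans

lemma Admissible.append (hβ : 0 < β) (hv : Admissible β t v) (hw : Admissible β t w)
    (hwβ : wordMap β w β⁻¹ ≤ β⁻¹) : Admissible β t (v ++ w) := by
  induction v with
  | nil => exact hw
  | cons b v ih =>
    obtain ⟨⟨hlow, hup⟩, hv⟩ := admissible_cons.mp hv
    refine admissible_cons.mpr ⟨?_, ih hv⟩
    change t ≤ wordMap β ((b :: v) ++ w) 0 ∧ wordMap β ((b :: v) ++ w) β⁻¹ ≤ 1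
    rw [wordMap_append, wordMap_append]
    exact ⟨hlow.trans (wordMap_mono hβ _ (wordMap_nonneg hβ w le_rfl)),
      (wordMap_mono hβ _ hwβ).trans hup⟩

end Admissible

section Shadowing

/-- The word `W` encodes `y` up to an error `ε` from below, and without crossing any endpoint
`onesValue β i` from above: it may then be preceded by the itinerary of a point that
`T_β` maps to `y`. -/
structure Shadows (β t ε y : ℝ) (W : List Bool) : Prop where
  admissible : Admissible β (t - ε) W
  sub_le : y - ε ≤ wordMap β W 0
  le_onesValue : ∀ i, y < onesValue β i → wordMap β W β⁻¹ ≤ onesValue β i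

/-- The word `(0 1ᵐ)^q`. When `onesValue β (m + 1) = 1`, its inverse branch fixes `β⁻¹`. -/
def loopWord (m q : ℕ) : List Bool :=
  (List.replicate q (false :: List.replicate m true)).flatten

/-- The word `1ʲ (0 1ᵐ)^q`, which encodes a point just below `onesValue β (j + 1)`. -/
def tailWord (m j q : ℕ) : List Bool := List.replicate j true ++ loopWord m q

variable {β t ε x y : ℝ} {m : ℕ} {W : List Bool}

lemma shadows_nil (hβ : 0 < β) : Shadows β t 0 0 [] where
  admissible := admissible_nil
  sub_le := by simp
  le_onesValue i hi := by
    rw [wordMap_nil, ← onesValue_one]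
    exact (onesValue_strictMono hβ).monotone ((onesValue_strictMono hβ).lt_iff_lt.mp hi)

lemma Shadows.wordMap_le_one (hm : onesValue β (m + 1) = 1) (h : Shadows β t ε y W) (hy : y < 1) :
    wordMap β W β⁻¹ ≤ 1 :=
  hm ▸ h.le_onesValue (m + 1) (hm.symm ▸ hy)

lemma Shadows.cons (hβ : 1 < β) (hm : onesValue β (m + 1) = 1) (hε : 0 ≤ ε) (b : Bool)
    (h : Shadows β t ε y W) (hy : y ∈ Ico (0 : ℝ) 1) (ht : t ≤ (b.toNat + y) / β)
    (h1 : (b.toNat + y) / β < 1) : Shadows β t ε ((b.toNat + y) / β) (b :: W) := by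
  have h0 : 0 < β := by positivity
  have hlow : (b.toNat + y) / β - ε ≤ wordMap β (b :: W) 0 :=
    calc (b.toNat + y) / β - ε
        ≤ (b.toNat + y) / β - ε / β := by gcongr; exact div_le_self hε hβ.le
      _ = (b.toNat + (y - ε)) / β := by ring
      _ ≤ wordMap β (b :: W) 0 := by rw [wordMap_cons]; gcongr; exact h.sub_le
  have hup : ∀ i, (b.toNat + y) / β < onesValue β i → wordMap β (b :: W) β⁻¹ ≤ onesValue β i := by
    rintro (_ | i) hi
    · rw [onesValue_zero] at hi
      have : 0 ≤ (b.toNat + y) / β := by have := hy.1; positivity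
      linarith
    rw [onesValue_succ, div_lt_div_iff_of_pos_right h0] at hi
    rw [onesValue_succ, wordMap_cons, div_le_div_iff_of_pos_right h0]
    cases b with
    | false =>
      have := h.wordMap_le_one hm hy.2
      have := onesValue_nonneg h0 i
      norm_num
      linarith
    | true =>
      have := h.le_onesValue i (by norm_num at hi; linarith)
      norm_num
      linarith
  refine ⟨admissible_cons.mpr ⟨⟨by linarith, hm ▸ hup (m + 1) (hm ▸ h1)⟩, h.admissible⟩, hlow, hup⟩

lemma Shadows.itinerary_append (hβ : 1 < β) (hm : onesValue β (m + 1) = 1) (hε : 0 ≤ ε) (n : ℕ)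
    (hx : x ∈ Kset β t) (h : Shadows β t ε ((Tbeta β)^[n] x) W) :
    Shadows β t ε x (itinerary β n x ++ W) := by
  induction n generalizing x with
  | zero => exact h
  | succ n ih =>
    have h0 : 0 < β := by positivity
    have hdigit := digit_add_Tbeta_div h0 (lt_two_of_onesValue_eq_one h0 hm).le hx.1
    have hcons := (ih (Tbeta_mem_Kset hx) h).cons hβ hm hε (digit β x) (Tbeta_mem_Ico β x)
    rw [hdigit] at hcons
    exact hcons (hx.2 0) hx.1.2

lemma Shadows.ones_append (hβ : 1 < β) (hm : onesValue β (m + 1) = 1) (hε : 0 ≤ ε) (ht : t ≤ β⁻¹)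
    {i r : ℕ} (hir : r + i ≤ m) (h0x : 0 ≤ x) (hx : x < onesValue β (i + 1))
    (h : Shadows β t ε x W) :
    Shadows β t ε (wordMap β (List.replicate r true) x) (List.replicate r true ++ W) := by
  have h0 : 0 < β := by positivity
  have hlt : ∀ r, r + i ≤ m → wordMap β (List.replicate r true) x < 1 := fun r hir =>
    calc wordMap β (List.replicate r true) x
        < wordMap β (List.replicate r true) (onesValue β (i + 1)) := wordMap_strictMono h0 _ hx
      _ = onesValue β (r + (i + 1)) := wordMap_replicate_onesValue r (i + 1)
      _ ≤ 1 := hm ▸ (onesValue_strictMono h0).monotone (by lia)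
  induction r with
  | zero => exact h
  | succ r ih =>
    have hnonneg := wordMap_nonneg h0 (List.replicate r true) h0x
    refine (ih (by lia)).cons hβ hm hε true ⟨hnonneg, hlt r (by lia)⟩ (ht.trans ?_)
      (hlt (r + 1) hir)
    rw [Bool.toNat_true, Nat.cast_one, inv_eq_one_div]
    gcongr
    linarith

lemma Shadows.zero_ones_append (hβ : 1 < β) (hm : onesValue β (m + 1) = 1) (hε : 0 ≤ ε)
    (ht : t ≤ 1 - β⁻¹) {i : ℕ} (hi : i ≤ m) (hx : x ∈ Ico (onesValue β i) (onesValue β (i + 1)))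
    (h : Shadows β t ε x W) :
    Shadows β t ε (wordMap β (false :: List.replicate (m - i) true) x)
      (false :: (List.replicate (m - i) true ++ W)) := by
  have h0 : 0 < β := by positivity
  set y := wordMap β (List.replicate (m - i) true) x
  have hylow : β - 1 ≤ y := by
    rw [← onesValue_eq_sub_one h0 hm, ← Nat.sub_add_cancel hi, ← wordMap_replicate_onesValue]
    exact wordMap_mono h0 _ hx.1
  have hyup : y < 1 := by
    rw [← hm, show m + 1 = m - i + (i + 1) by lia, ← wordMap_replicate_onesValue]
    exact wordMap_strictMono h0 _ hx.2
  have hshadows := h.ones_append hβ hm hε (ht.trans (one_sub_inv_le_inv h0 hm))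
    (Nat.sub_add_cancel hi).le ((onesValue_nonneg h0 i).trans hx.1) hx.2
  refine hshadows.cons hβ hm hε false ⟨by linarith, hyup⟩ (ht.trans ?_) ?_
  · rw [Bool.toNat_false, Nat.cast_zero, zero_add, le_div_iff₀ h0, sub_mul, inv_mul_cancel₀ h0.ne',
      one_mul]
    exact hylow
  · rw [Bool.toNat_false, Nat.cast_zero, zero_add, div_lt_one h0]
    linarith

lemma loopWord_succ (m q : ℕ) :
    loopWord m (q + 1) = false :: (List.replicate m true ++ loopWord m q) := rfl

lemma wordMap_loopWord_inv (hm : onesValue β (m + 1) = 1) (q : ℕ) :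
    wordMap β (loopWord m q) β⁻¹ = β⁻¹ := by
  induction q with
  | zero => rfl
  | succ q ih =>
    rw [loopWord_succ, wordMap_cons, wordMap_append, ih, wordMap_replicate_inv, hm]
    simp

lemma wordMap_tailWord_inv (hm : onesValue β (m + 1) = 1) (j q : ℕ) :
    wordMap β (tailWord m j q) β⁻¹ = onesValue β (j + 1) := by
  rw [tailWord, wordMap_append, wordMap_loopWord_inv hm, wordMap_replicate_inv]

lemma wordMap_loopWord_zero_lt (hβ : 0 < β) (hm : onesValue β (m + 1) = 1) (q : ℕ) :
    wordMap β (loopWord m q) 0 < β⁻¹ :=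
  (wordMap_strictMono hβ _ (inv_pos.mpr hβ)).trans_eq (wordMap_loopWord_inv hm q)

lemma le_length_tailWord (m j q : ℕ) : q ≤ (tailWord m j q).length := by
  simp only [tailWord, loopWord, List.length_append, List.length_replicate, List.length_flatten,
    List.map_replicate, List.length_cons, List.sum_replicate, smul_eq_mul]
  nlinarith

lemma onesValue_sub_le_wordMap_tailWord (hβ : 1 < β) (hm : onesValue β (m + 1) = 1) (j q : ℕ) :
    onesValue β (j + 1) - (β ^ q)⁻¹ ≤ wordMap β (tailWord m j q) 0 := by
  have hsub := wordMap_sub_wordMap (β := β) (tailWord m j q) β⁻¹ 0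
  rw [wordMap_tailWord_inv hm, sub_zero] at hsub
  have : β⁻¹ / β ^ (tailWord m j q).length ≤ (β ^ q)⁻¹ :=
    calc β⁻¹ / β ^ (tailWord m j q).length ≤ 1 / β ^ q := by
          gcongr
          · exact inv_le_one_of_one_le₀ hβ.le
          · exact hβ.le
          · exact le_length_tailWord m j q
      _ = (β ^ q)⁻¹ := one_div _
  linarith

lemma shadows_loopWord (hβ : 1 < β) (hm : onesValue β (m + 1) = 1) (ht : t ≤ 1 - β⁻¹) (q : ℕ) :
    Shadows β t 0 (wordMap β (loopWord m q) 0) (loopWord m q) := by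
  have h0 : 0 < β := by positivity
  induction q with
  | zero => exact shadows_nil h0
  | succ q ih =>
    have hloop := ih.zero_ones_append hβ hm le_rfl ht m.zero_le
      ⟨wordMap_nonneg h0 _ le_rfl, onesValue_one (β := β) ▸ wordMap_loopWord_zero_lt h0 hm q⟩
    rw [loopWord_succ]
    rwa [wordMap_cons, ← wordMap_append, ← wordMap_cons] at hloop

lemma shadows_tailWord (hβ : 1 < β) (hm : onesValue β (m + 1) = 1) (ht : t ≤ 1 - β⁻¹)
    (hε : 0 ≤ ε) {j q : ℕ} (hj : j ≤ m) (hy : onesValue β j ≤ y)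
    (hyq : y - ε ≤ onesValue β (j + 1) - (β ^ q)⁻¹) : Shadows β t ε y (tailWord m j q) := by
  have h0 : 0 < β := by positivity
  have hadm := ((shadows_loopWord hβ hm ht q).ones_append (r := j) (i := 0) hβ hm le_rfl
    (ht.trans (one_sub_inv_le_inv h0 hm)) hj (wordMap_nonneg h0 _ le_rfl)
    (onesValue_one (β := β) ▸ wordMap_loopWord_zero_lt h0 hm q)).admissible
  refine ⟨hadm.mono (by linarith), hyq.trans (onesValue_sub_le_wordMap_tailWord hβ hm j q),
    fun i hi => ?_⟩
  rw [wordMap_tailWord_inv hm]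
  exact (onesValue_strictMono h0).monotone ((onesValue_strictMono h0).lt_iff_lt.mp (hy.trans_lt hi))

end Shadowing

section Languages

/-- The words of length `n` in a language `S`. -/
noncomputable def wordsOfLength (S : Set (List Bool)) (n : ℕ) : Finset (List Bool) :=
  ((List.finite_length_eq Bool n).inter_of_right S).toFinset

/-- The finite itineraries of the points of `K_β(t)`. -/
def language (β t : ℝ) : Set (List Bool) := {w | ∃ x ∈ Kset β t, itinerary β w.length x = w}

/-- The admissible words that may be followed by any word starting with `0`. -/
def freeWords (β t : ℝ) : Set (List Bool) := {w | Admissible β t w ∧ wordMap β w β⁻¹ ≤ β⁻¹}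

/-- The admissible words whose free concatenations all code points of `K_β(t)`. The inequality is
strict, so that distinct concatenations code distinct points. -/
def blocks (β t : ℝ) : Set (List Bool) := {w | Admissible β t w ∧ wordMap β w β⁻¹ < β⁻¹}

lemma mem_wordsOfLength {S : Set (List Bool)} {n : ℕ} {w : List Bool} :
    w ∈ wordsOfLength S n ↔ w ∈ S ∧ w.length = n := by
  simp [wordsOfLength]

end Languages

section BlockPoints

/-- The point coded by the infinite concatenation of the words `ω k`, all of length `L`. -/
noncomputable def blockPoint (β : ℝ) (L : ℕ) (ω : ℕ → List Bool) : ℝ :=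
  ∑' k, wordMap β (ω k) 0 / (β ^ L) ^ k

variable {β t c : ℝ} {L : ℕ} {ω ω' : ℕ → List Bool} {w w' : List Bool}

lemma Admissible.wordMap_le_one (hβ : 1 ≤ β) (h : Admissible β t w) : wordMap β w β⁻¹ ≤ 1 := by
  rcases w with _ | ⟨b, w⟩
  · exact inv_le_one_of_one_le₀ hβ
  · exact (admissible_cons.mp h).1.2

lemma Admissible.div_le_one_sub_wordMap (hβ : 1 ≤ β) (h : Admissible β t w) {y : ℝ}
    (hy : y ≤ β⁻¹ - c) : c / β ^ w.length ≤ 1 - wordMap β w y := by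
  have hsub := wordMap_sub_wordMap (β := β) w β⁻¹ y
  have hle : c / β ^ w.length ≤ (β⁻¹ - y) / β ^ w.length := by
    gcongr
    linarith
  linarith [h.wordMap_le_one hβ]

lemma Admissible.div_le_abs_wordMap_sub (hβ : 1 ≤ β) (hw : Admissible β t w)
    (hw' : Admissible β t w') (hlen : w.length = w'.length) (hne : w ≠ w') {y y' : ℝ} (hy : 0 ≤ y)
    (hyc : y ≤ β⁻¹ - c) (hy' : 0 ≤ y') (hyc' : y' ≤ β⁻¹ - c) :
    c / β ^ w.length ≤ |wordMap β w y - wordMap β w' y'| := by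
  have h0 : 0 < β := by positivity
  induction w generalizing w' with
  | nil => exact absurd (List.length_eq_zero_iff.mp hlen.symm).symm hne
  | cons b w ih =>
    obtain _ | ⟨b', w'⟩ := w'
    · simp at hlen
    replace hw := (admissible_cons.mp hw).2
    replace hw' := (admissible_cons.mp hw').2
    replace hlen : w.length = w'.length := Nat.succ_injective hlen
    rw [wordMap_cons, wordMap_cons, ← sub_div, abs_div, abs_of_pos h0, List.length_cons, pow_succ,
      ← div_div]
    gcongr
    have hwy := wordMap_nonneg h0 w hy
    have hwy' := wordMap_nonneg h0 w' hy'
    cases b <;> cases b' <;>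
      simp only [Bool.toNat_false, Bool.toNat_true, Nat.cast_zero, Nat.cast_one,
        zero_add, add_sub_add_left_eq_sub]
    · exact ih hw hw' hlen (by simpa using hne)
    · linarith [hw.div_le_one_sub_wordMap hβ hyc,
        neg_abs_le (wordMap β w y - (1 + wordMap β w' y'))]
    · linarith [hlen ▸ hw'.div_le_one_sub_wordMap hβ hyc',
        le_abs_self (1 + wordMap β w y - wordMap β w' y')]
    · exact ih hw hw' hlen (by simpa using hne)

lemma ne_nil_of_mem_blocks (hw : w ∈ blocks β t) : w ≠ [] :=
  fun h => hw.2.ne (by rw [h, wordMap_nil])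

lemma pos_of_mem_wordsOfLength_blocks (hw : w ∈ wordsOfLength (blocks β t) L) : 0 < L :=
  have ⟨hmem, hlen⟩ := mem_wordsOfLength.mp hw
  hlen ▸ List.length_pos_of_ne_nil (ne_nil_of_mem_blocks hmem)

lemma wordMap_zero_div_le (hβ : 0 < β) (hw : w ∈ wordsOfLength (blocks β t) L) (k : ℕ) :
    wordMap β w 0 / (β ^ L) ^ k ≤ β⁻¹ * (1 - (β ^ L)⁻¹) * (β ^ L)⁻¹ ^ k := by
  obtain ⟨⟨-, hlt⟩, rfl⟩ := mem_wordsOfLength.mp hw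
  have hsub := wordMap_sub_wordMap (β := β) w β⁻¹ 0
  rw [sub_zero, div_eq_mul_inv] at hsub
  rw [inv_pow, div_eq_mul_inv]
  gcongr
  linarith

lemma hasSum_inv_mul_geometric (hβ : 1 < β) (hL : L ≠ 0) :
    HasSum (fun k : ℕ => β⁻¹ * (1 - (β ^ L)⁻¹) * (β ^ L)⁻¹ ^ k) β⁻¹ := by
  have hr : (β ^ L)⁻¹ < 1 := inv_lt_one_of_one_lt₀ (one_lt_pow₀ hβ hL)
  have hgeom := (hasSum_geometric_of_lt_one (by positivity) hr).mul_left (β⁻¹ * (1 - (β ^ L)⁻¹))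
  rwa [mul_assoc, mul_inv_cancel₀ (by linarith), mul_one] at hgeom

lemma summable_blockPoint (hβ : 1 < β) (hω : ∀ k, ω k ∈ wordsOfLength (blocks β t) L) :
    Summable fun k => wordMap β (ω k) 0 / (β ^ L) ^ k := by
  have h0 : 0 < β := by positivity
  refine .of_nonneg_of_le (fun k => ?_) (fun k => wordMap_zero_div_le h0 (hω k) k)
    (hasSum_inv_mul_geometric hβ (pos_of_mem_wordsOfLength_blocks (hω 0)).ne').summable
  have := wordMap_nonneg h0 (ω k) le_rfl
  positivity

lemma blockPoint_nonneg (hβ : 0 < β) : 0 ≤ blockPoint β L ω := tsum_nonneg fun k => by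
  have := wordMap_nonneg hβ (ω k) le_rfl
  positivity

lemma blockPoint_le_inv (hβ : 1 < β) (hω : ∀ k, ω k ∈ wordsOfLength (blocks β t) L) :
    blockPoint β L ω ≤ β⁻¹ :=
  hasSum_le (fun k => wordMap_zero_div_le (by positivity) (hω k) k)
    (summable_blockPoint hβ hω).hasSum
    (hasSum_inv_mul_geometric hβ (pos_of_mem_wordsOfLength_blocks (hω 0)).ne')

lemma blockPoint_eq_wordMap (hβ : 1 < β) (hω : ∀ k, ω k ∈ wordsOfLength (blocks β t) L) :
    blockPoint β L ω = wordMap β (ω 0) (blockPoint β L fun k => ω (k + 1)) := by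
  rw [wordMap_eq_add, (mem_wordsOfLength.mp (hω 0)).2, blockPoint,
    (summable_blockPoint hβ hω).tsum_eq_zero_add, pow_zero, div_one, blockPoint, ← tsum_div_const]
  simp only [pow_succ, div_div]

lemma blockPoint_le_wordMap (hβ : 1 < β) (hω : ∀ k, ω k ∈ wordsOfLength (blocks β t) L) :
    blockPoint β L ω ≤ wordMap β (ω 0) β⁻¹ := by
  rw [blockPoint_eq_wordMap hβ hω]
  exact wordMap_mono (by positivity) _ (blockPoint_le_inv hβ fun k => hω (k + 1))

lemma Admissible.wordMap_blockPoint_mem_Ico (hβ : 1 < β) (hw : Admissible β t w)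
    (hω : ∀ k, ω k ∈ wordsOfLength (blocks β t) L) :
    wordMap β w (blockPoint β L ω) ∈ Ico (0 : ℝ) 1 := by
  have h0 : 0 < β := by positivity
  have hlt : blockPoint β L ω < β⁻¹ :=
    (blockPoint_le_wordMap hβ hω).trans_lt (mem_wordsOfLength.mp (hω 0)).1.2
  exact ⟨wordMap_nonneg h0 _ (blockPoint_nonneg h0),
    (wordMap_strictMono h0 _ hlt).trans_le (hw.wordMap_le_one hβ.le)⟩

lemma blockPoint_mem_Kset (hβ : 1 < β) (hω : ∀ k, ω k ∈ wordsOfLength (blocks β t) L) :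
    blockPoint β L ω ∈ Kset β t := by
  have h0 : 0 < β := by positivity
  let S : Set ℝ := {x | ∃ w ω, w ≠ [] ∧ Admissible β t w ∧
    (∀ k, ω k ∈ wordsOfLength (blocks β t) L) ∧ wordMap β w (blockPoint β L ω) = x}
  have hblock {ω} (hω : ∀ k, ω k ∈ wordsOfLength (blocks β t) L) : blockPoint β L ω ∈ S :=
    have hmem := (mem_wordsOfLength.mp (hω 0)).1
    ⟨ω 0, _, ne_nil_of_mem_blocks hmem, hmem.1, fun k => hω (k + 1),
      (blockPoint_eq_wordMap hβ hω).symm⟩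
  refine subset_Kset_of_mapsTo (s := S) ?_ ?_ ?_ (hblock hω)
  · rintro _ ⟨w, ω, -, hw, hω, rfl⟩
    exact hw.wordMap_blockPoint_mem_Ico hβ hω
  · rintro _ ⟨w, ω, hne, hw, -, rfl⟩
    exact (hw w hne List.suffix_rfl).1.trans (wordMap_mono h0 w (blockPoint_nonneg h0))
  · rintro _ ⟨w, ω, hne, hw, hω, rfl⟩
    obtain ⟨b, w, rfl⟩ := List.exists_cons_of_ne_nil hne
    replace hw := (admissible_cons.mp hw).2
    rw [Tbeta_wordMap_cons h0.ne' b (hw.wordMap_blockPoint_mem_Ico hβ hω)]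
    obtain rfl | hne := eq_or_ne w []
    · exact hblock hω
    · exact ⟨w, ω, hne, hw, hω, rfl⟩

lemma div_le_abs_blockPoint_sub (hβ : 1 < β) (hω : ∀ k, ω k ∈ wordsOfLength (blocks β t) L)
    (hω' : ∀ k, ω' k ∈ wordsOfLength (blocks β t) L)
    (hc : ∀ w ∈ wordsOfLength (blocks β t) L, wordMap β w β⁻¹ ≤ β⁻¹ - c) {k : ℕ}
    (heq : ∀ i < k, ω i = ω' i) (hne : ω k ≠ ω' k) :
    c / β ^ L / (β ^ L) ^ k ≤ |blockPoint β L ω - blockPoint β L ω'| := by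
  have h0 : 0 < β := by positivity
  have hle {ν : ℕ → List Bool} (hν : ∀ k, ν k ∈ wordsOfLength (blocks β t) L) :
      blockPoint β L ν ≤ β⁻¹ - c :=
    (blockPoint_le_wordMap (ω := ν) hβ hν).trans (hc _ (hν 0))
  induction k generalizing ω ω' with
  | zero =>
    obtain ⟨⟨hadm, -⟩, hlen⟩ := mem_wordsOfLength.mp (hω 0)
    obtain ⟨⟨hadm', -⟩, hlen'⟩ := mem_wordsOfLength.mp (hω' 0)
    rw [pow_zero, div_one, blockPoint_eq_wordMap hβ hω, blockPoint_eq_wordMap hβ hω']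
    nth_rw 1 [← hlen]
    exact hadm.div_le_abs_wordMap_sub hβ.le hadm' (hlen.trans hlen'.symm) hne
      (blockPoint_nonneg h0) (hle fun k => hω (k + 1)) (blockPoint_nonneg h0)
      (hle fun k => hω' (k + 1))
  | succ k ih =>
    have htail := ih (fun k => hω (k + 1)) (fun k => hω' (k + 1)) (fun i hi => heq _ (by lia)) hne
    rw [blockPoint_eq_wordMap hβ hω, blockPoint_eq_wordMap hβ hω', ← heq 0 k.succ_pos,
      wordMap_sub_wordMap, (mem_wordsOfLength.mp (hω 0)).2, abs_div,
      abs_of_pos (pow_pos h0 L), pow_succ, ← div_div]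
    exact div_le_div_of_nonneg_right htail (by positivity)

theorem le_dimH_Kset_of_blocks (hβ : 1 < β) (t : ℝ) (L : ℕ) :
    ENNReal.ofReal (Real.logb (β ^ L) (wordsOfLength (blocks β t) L).card) ≤
      dimH (Kset β t) := by
  obtain rfl | hL := eq_or_ne L 0
  · simp
  set words := wordsOfLength (blocks β t) L
  obtain ⟨c, hc, hgap⟩ : ∃ c > 0, ∀ w : words, wordMap β w β⁻¹ + c < β⁻¹ :=
    Pi.exists_forall_pos_add_lt fun w => (mem_wordsOfLength.mp w.2).1.2
  let ω (a : ℕ → Fin words.card) (k : ℕ) : List Bool := words.equivFin.symm (a k)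
  have hω a k : ω a k ∈ words := (words.equivFin.symm (a k)).2
  refine (le_dimH_range_of_separated (X := fun a => blockPoint β L (ω a)) (c := c / β ^ L)
    (one_lt_pow₀ hβ hL) (by positivity) fun k a a' heq hne => ?_).trans
    (dimH_mono (range_subset_iff.mpr fun a => blockPoint_mem_Kset hβ (hω a)))
  refine div_le_abs_blockPoint_sub hβ (hω a) (hω a')
    (fun w hw => by linarith [hgap ⟨w, hw⟩]) (fun i hi => by simp only [ω, heq i hi])
    fun h => hne (words.equivFin.symm.injective (Subtype.ext h))

end BlockPoints

section UpperBound

variable {β t x y : ℝ}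

lemma mem_wordsOfLength_language {n : ℕ} {w : List Bool} :
    w ∈ wordsOfLength (language β t) n ↔ ∃ x ∈ Kset β t, itinerary β n x = w := by
  refine mem_wordsOfLength.trans ⟨?_, ?_⟩
  · rintro ⟨h, rfl⟩
    exact h
  · rintro ⟨x, hx, rfl⟩
    exact ⟨⟨x, hx, by rw [length_itinerary]⟩, length_itinerary n x⟩

lemma card_wordsOfLength_language_add_le (n k : ℕ) :
    (wordsOfLength (language β t) (n + k)).card ≤
      (wordsOfLength (language β t) n).card * (wordsOfLength (language β t) k).card := by
  refine (Finset.card_le_card fun w hw => ?_).trans (Finset.card_image₂_le (· ++ ·) _ _)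
  obtain ⟨x, hx, rfl⟩ := mem_wordsOfLength_language.mp hw
  exact Finset.mem_image₂.mpr ⟨_, mem_wordsOfLength_language.mpr ⟨x, hx, rfl⟩, _,
    mem_wordsOfLength_language.mpr ⟨_, iterate_Tbeta_mem_Kset hx n, rfl⟩,
    (itinerary_add n k x).symm⟩

lemma card_wordsOfLength_language_mul_le (n p : ℕ) :
    (wordsOfLength (language β t) (n * p)).card ≤ (wordsOfLength (language β t) n).card ^ p := by
  induction p with
  | zero =>
    refine Finset.card_le_one.mpr fun v hv w hw => ?_
    rw [List.length_eq_zero_iff.mp (mem_wordsOfLength.mp hv).2,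
      List.length_eq_zero_iff.mp (mem_wordsOfLength.mp hw).2]
  | succ p ih =>
    rw [Nat.mul_succ, pow_succ]
    exact (card_wordsOfLength_language_add_le _ _).trans (Nat.mul_le_mul_right _ ih)

lemma dist_le_of_itinerary_eq (h0 : 0 < β) (h2 : β ≤ 2) (hx : x ∈ Ico (0 : ℝ) 1)
    (hy : y ∈ Ico (0 : ℝ) 1) {n : ℕ} (h : itinerary β n x = itinerary β n y) :
    dist x y ≤ (β ^ n)⁻¹ := by
  have hTx := iterate_Tbeta_mem_Ico (β := β) hx n
  have hTy := iterate_Tbeta_mem_Ico (β := β) hy n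
  rw [← wordMap_itinerary h0 h2 n hx, ← wordMap_itinerary h0 h2 n hy, h, Real.dist_eq,
    wordMap_sub_wordMap, length_itinerary, abs_div, abs_of_pos (pow_pos h0 n), ← one_div]
  gcongr
  exact abs_le.mpr ⟨by linarith [hTx.1, hTy.2], by linarith [hTx.2, hTy.1]⟩

lemma dimH_Kset_le_logb_card_language (h1 : 1 < β) (h2 : β ≤ 2) {n : ℕ} (hn : n ≠ 0) :
    dimH (Kset β t) ≤
      ENNReal.ofReal (Real.logb (β ^ n) (wordsOfLength (language β t) n).card) :=
  dimH_le_of_code (one_lt_pow₀ h1 hn) (fun p => itinerary β (n * p))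
    (fun p => wordsOfLength (language β t) (n * p))
    (fun _ x hx => mem_wordsOfLength_language.mpr ⟨x, hx, rfl⟩)
    (card_wordsOfLength_language_mul_le n)
    fun p _ hx _ hy h => (dist_le_of_itinerary_eq (by positivity) h2 hx.1 hy.1 h).trans_eq
      (by rw [pow_mul])

lemma dimH_Kset_ne_top (β t : ℝ) : dimH (Kset β t) ≠ ⊤ :=
  ((dimH_mono (subset_univ _)).trans_lt (Real.dimH_univ.trans_lt ENNReal.one_lt_top)).ne

theorem rpow_dimH_pow_le_card_language (h1 : 1 < β) (h2 : β ≤ 2) (hK : (Kset β t).Nonempty)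
    (n : ℕ) : (β ^ (dimH (Kset β t)).toReal) ^ n ≤ (wordsOfLength (language β t) n).card := by
  obtain ⟨x, hx⟩ := hK
  have hcard : 0 < (wordsOfLength (language β t) n).card :=
    Finset.card_pos.mpr ⟨_, mem_wordsOfLength_language.mpr ⟨x, hx, rfl⟩⟩
  obtain rfl | hn := eq_or_ne n 0
  · rw [pow_zero]
    exact_mod_cast hcard
  have hβn : 1 < β ^ n := one_lt_pow₀ h1 hn
  rw [Real.rpow_pow_comm (by positivity),
    ← Real.le_logb_iff_rpow_le hβn (by exact_mod_cast hcard)]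
  exact ENNReal.toReal_le_of_le_ofReal (Real.logb_nonneg hβn (by exact_mod_cast hcard))
    (dimH_Kset_le_logb_card_language h1 h2 hn)

end UpperBound

section Counting

open Finset.HasAntidiagonal (antidiagonal)

lemma sum_antidiagonal_add_le {f : ℕ × ℕ → ℝ} (hf : ∀ p, 0 ≤ f p) (n c d : ℕ) :
    ∑ p ∈ antidiagonal n, f (p.1 + c, p.2 + d) ≤
      ∑ p ∈ antidiagonal (n + c + d), f p := by
  have hinj : Function.Injective fun p : ℕ × ℕ => (p.1 + c, p.2 + d) := fun p q h => by
    simp only [Prod.mk.injEq] at h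
    exact Prod.ext (by lia) (by lia)
  rw [← Finset.sum_image (f := f) hinj.injOn]
  refine Finset.sum_le_sum_of_subset_of_nonneg (fun q hq => ?_) fun p _ _ => hf p
  obtain ⟨p, hp, rfl⟩ := Finset.mem_image.mp hq
  rw [Finset.HasAntidiagonal.mem_antidiagonal] at hp ⊢
  lia

/-- Concatenating in pairs yields `n + 1` products of size `x ^ n`, one for each position of the
cut, whence the strict inequality. -/
lemma exists_pow_lt_of_sum_antidiagonal_le {ι : Type*} {s : Finset ι} {ℓ : ι → ℕ} {u : ℕ} {x : ℝ}
    (hx : 0 < x) {a b : ℕ → ℝ} (ha : ∀ n, 0 ≤ a n) (hxa : ∀ n, x ^ n ≤ ∑ i ∈ s, a (n + ℓ i))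
    (hab : ∀ n, ∑ p ∈ antidiagonal n, a p.1 * a p.2 ≤ b (n + u)) : ∃ n, x ^ n < b n := by
  by_contra! hb
  have hbound : ∀ n : ℕ, (n + 1 : ℝ) ≤ ∑ i ∈ s, ∑ j ∈ s, x ^ (ℓ i + ℓ j + u) := fun n => by
    refine le_of_mul_le_mul_right ?_ (pow_pos hx n)
    calc (n + 1 : ℝ) * x ^ n = ∑ p ∈ antidiagonal n, x ^ p.1 * x ^ p.2 := by
          rw [Finset.sum_congr rfl fun p hp => by
              rw [← pow_add, Finset.HasAntidiagonal.mem_antidiagonal.mp hp], Finset.sum_const,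
            Finset.Nat.card_antidiagonal, nsmul_eq_mul]
          push_cast
          rfl
      _ ≤ ∑ p ∈ antidiagonal n, (∑ i ∈ s, a (p.1 + ℓ i)) * ∑ j ∈ s, a (p.2 + ℓ j) := by
          gcongr
          exacts [Finset.sum_nonneg fun i _ => ha _, hxa _, hxa _]
      _ = ∑ i ∈ s, ∑ j ∈ s, ∑ p ∈ antidiagonal n, a (p.1 + ℓ i) * a (p.2 + ℓ j) := by
          simp_rw [Finset.sum_mul_sum]
          rw [Finset.sum_comm]
          exact Finset.sum_congr rfl fun i _ => Finset.sum_comm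
      _ ≤ ∑ i ∈ s, ∑ j ∈ s, x ^ (n + ℓ i + ℓ j + u) := by
          gcongr with i _ j _
          exact (sum_antidiagonal_add_le (f := fun p => a p.1 * a p.2)
            (fun p => mul_nonneg (ha _) (ha _)) n _ _).trans ((hab _).trans (hb _))
      _ = (∑ i ∈ s, ∑ j ∈ s, x ^ (ℓ i + ℓ j + u)) * x ^ n := by
          simp_rw [Finset.sum_mul, ← pow_add]
          refine Finset.sum_congr rfl fun i _ => Finset.sum_congr rfl fun j _ => ?_
          congr 1
          ring
  obtain ⟨n, hn⟩ := exists_nat_gt (∑ i ∈ s, ∑ j ∈ s, x ^ (ℓ i + ℓ j + u))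
  linarith [hbound n]

/-- A word `0 1ᵐ⁻ⁱ v 1ʲ (0 1ᵐ)^q`, where `p = (i, j)`. For suitable `i`, `j` and `q` this makes a
given word `v` of the language a free word, at the expense of a slightly smaller threshold. -/
def extendWord (m q : ℕ) (p : ℕ × ℕ) (v : List Bool) : List Bool :=
  false :: (List.replicate (m - p.1) true ++ (v ++ tailWord m p.2 q))

variable {β t τ : ℝ} {m : ℕ}

lemma length_extendWord (m q : ℕ) (p : ℕ × ℕ) (v : List Bool) :
    (extendWord m q p v).length = v.length + (extendWord m q p []).length := by
  simp only [extendWord, List.length_cons, List.length_append, List.length_nil]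
  ring

lemma extendWord_injective (m q : ℕ) (p : ℕ × ℕ) : Function.Injective (extendWord m q p) :=
  fun v w h => by simpa [extendWord] using h

lemma Admissible.mem_freeWords (hβ : 1 ≤ β) {w : List Bool} (h : Admissible β t (false :: w)) :
    false :: w ∈ freeWords β t := by
  refine ⟨h, ?_⟩
  rw [wordMap_cons, Bool.toNat_false, Nat.cast_zero, zero_add, div_eq_mul_inv]
  exact mul_le_of_le_one_left (by positivity) ((admissible_cons.mp h).2.wordMap_le_one hβ)

lemma exists_extendWord_mem_freeWords (hβ : 1 < β) (hm : onesValue β (m + 1) = 1)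
    (ht : t ≤ 1 - β⁻¹) {q : ℕ} (hq : (β ^ q)⁻¹ ≤ t - τ) {x : ℝ} (hx : x ∈ Kset β t) (n : ℕ) :
    ∃ i ≤ m, ∃ j ≤ m, extendWord m q (i, j) (itinerary β n x) ∈ freeWords β τ := by
  have hε : 0 ≤ t - τ := le_trans (by positivity) hq
  obtain ⟨i, hi, hxi⟩ := exists_mem_Ico_onesValue hm hx.1
  obtain ⟨j, hj, hnj⟩ := exists_mem_Ico_onesValue hm (iterate_Tbeta_mem_Kset hx n).1
  have htail := shadows_tailWord (q := q) hβ hm ht hε hj hnj.1 (by linarith [hnj.2])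
  have hword := (htail.itinerary_append hβ hm hε n hx).zero_ones_append hβ hm hε ht hi hxi
  refine ⟨i, hi, j, hj, Admissible.mem_freeWords hβ.le ?_⟩
  simpa only [sub_sub_cancel] using hword.admissible

lemma card_language_le_sum_card_freeWords (hβ : 1 < β) (hm : onesValue β (m + 1) = 1)
    (ht : t ≤ 1 - β⁻¹) {q : ℕ} (hq : (β ^ q)⁻¹ ≤ t - τ) (n : ℕ) :
    (wordsOfLength (language β t) n).card ≤
      ∑ p ∈ Finset.range (m + 1) ×ˢ Finset.range (m + 1),
        (wordsOfLength (freeWords β τ) (n + (extendWord m q p []).length)).card := by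
  classical
  have hcover : wordsOfLength (language β t) n ⊆
      (Finset.range (m + 1) ×ˢ Finset.range (m + 1)).biUnion fun p =>
        {v ∈ wordsOfLength (language β t) n | extendWord m q p v ∈ freeWords β τ} := fun v hv => by
    obtain ⟨x, hx, rfl⟩ := mem_wordsOfLength_language.mp hv
    obtain ⟨i, hi, j, hj, hfree⟩ := exists_extendWord_mem_freeWords hβ hm ht hq hx n
    exact Finset.mem_biUnion.mpr ⟨(i, j), Finset.mk_mem_product (Finset.mem_range_succ_iff.mpr hi)
      (Finset.mem_range_succ_iff.mpr hj), Finset.mem_filter.mpr ⟨hv, hfree⟩⟩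
  refine (Finset.card_le_card hcover).trans (Finset.card_biUnion_le.trans ?_)
  refine Finset.sum_le_sum fun p _ => Finset.card_le_card_of_injOn (extendWord m q p)
    (fun v hv => ?_) (extendWord_injective m q p).injOn
  obtain ⟨hv, hfree⟩ := Finset.mem_filter.mp hv
  rw [Finset.mem_coe, mem_wordsOfLength, length_extendWord, (mem_wordsOfLength.mp hv).2]
  exact ⟨hfree, rfl⟩

/-- The word `U` serves as a separator: it is too small to occur inside a word that is admissible
for the threshold `τ`. -/
lemma exists_admissible_wordMap_lt (hβ : 1 < β) (hm : onesValue β (m + 1) = 1)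
    (ht : t ∈ Kset β t) (ht1 : t ≤ 1 - β⁻¹) (hτ : t < τ) :
    ∃ U, Admissible β t U ∧ wordMap β U β⁻¹ < τ := by
  have h0 : 0 < β := by positivity
  have hinv : β⁻¹ < 1 := inv_lt_one_of_one_lt₀ hβ
  obtain ⟨n, hn⟩ := exists_pow_lt_of_lt_one (sub_pos.mpr hτ) hinv
  obtain ⟨j, hj, hnj⟩ := exists_mem_Ico_onesValue hm (iterate_Tbeta_mem_Kset ht n).1
  obtain ⟨q, hq⟩ := exists_pow_lt_of_lt_one (sub_pos.mpr hnj.2) hinv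
  have htail := shadows_tailWord (q := q) hβ hm ht1 le_rfl hj hnj.1
    (by rw [← inv_pow]; linarith)
  refine ⟨_, by simpa using (htail.itinerary_append hβ hm le_rfl n ht).admissible, ?_⟩
  have hsub := wordMap_sub_wordMap (β := β) (itinerary β n t) (wordMap β (tailWord m j q) β⁻¹)
    ((Tbeta β)^[n] t)
  rw [wordMap_itinerary h0 (lt_two_of_onesValue_eq_one h0 hm).le n ht.1, length_itinerary] at hsub
  have hle : (wordMap β (tailWord m j q) β⁻¹ - (Tbeta β)^[n] t) / β ^ n ≤ β⁻¹ ^ n := by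
    rw [inv_pow, ← one_div (β ^ n)]
    gcongr
    linarith [htail.wordMap_le_one hm (iterate_Tbeta_mem_Kset ht n).1.2,
      (iterate_Tbeta_mem_Kset ht n).1.1]
  rw [wordMap_append]
  linarith

lemma length_le_of_append_separator_eq (hβ : 0 < β) {A B A' B' U : List Bool}
    (hU : wordMap β U β⁻¹ < τ) (hB : wordMap β B β⁻¹ ≤ β⁻¹) (hA' : Admissible β τ A')
    (h : A ++ (U ++ B) = A' ++ (U ++ B')) : A'.length ≤ A.length := by
  obtain ⟨C, hC, hCB⟩ | ⟨C, hC, -⟩ := List.append_eq_append_iff.mp h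
  · obtain rfl | hne := eq_or_ne C []
    · simp [hC]
    have hlow : τ ≤ wordMap β (U ++ B) β⁻¹ :=
      calc τ ≤ wordMap β C 0 := (hA' C hne (hC ▸ List.suffix_append A C)).1
        _ ≤ wordMap β C (wordMap β (U ++ B') β⁻¹) :=
          wordMap_mono hβ C (wordMap_nonneg hβ _ (inv_nonneg.mpr hβ.le))
        _ = wordMap β (U ++ B) β⁻¹ := by rw [← wordMap_append, hCB]
    rw [wordMap_append] at hlow
    linarith [wordMap_mono hβ U hB]
  · simp [hC]

lemma append_separator_inj (hβ : 0 < β) {A B A' B' U : List Bool} (hU : wordMap β U β⁻¹ < τ)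
    (hA : A ∈ freeWords β τ) (hB : B ∈ freeWords β τ) (hA' : A' ∈ freeWords β τ)
    (hB' : B' ∈ freeWords β τ) (h : A ++ (U ++ B) = A' ++ (U ++ B')) : A = A' ∧ B = B' := by
  have hlen : A.length = A'.length :=
    (length_le_of_append_separator_eq hβ hU hB'.2 hA.1 h.symm).antisymm
      (length_le_of_append_separator_eq hβ hU hB.2 hA'.1 h)
  obtain ⟨hAA', hUB⟩ := List.append_inj h hlen
  exact ⟨hAA', List.append_cancel_left hUB⟩

lemma append_separator_mem_blocks (hβ : 0 < β) {A B U : List Bool} (ht : t ≤ τ) (hτ : τ ≤ β⁻¹)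
    (hU : Admissible β t U) (hUτ : wordMap β U β⁻¹ < τ) (hA : A ∈ freeWords β τ)
    (hB : B ∈ freeWords β τ) : A ++ (U ++ B) ∈ blocks β t := by
  have hUB : wordMap β (U ++ B) β⁻¹ < β⁻¹ := by
    rw [wordMap_append]
    exact ((wordMap_mono hβ U hB.2).trans_lt hUτ).trans_le hτ
  refine ⟨(hA.1.mono ht).append hβ (hU.append hβ (hB.1.mono ht) hB.2) hUB.le, ?_⟩
  rw [wordMap_append]
  exact (wordMap_strictMono hβ A hUB).trans_le hA.2

lemma sum_card_freeWords_mul_le_card_blocks (hβ : 0 < β) {U : List Bool} (ht : t ≤ τ)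
    (hτ : τ ≤ β⁻¹) (hU : Admissible β t U) (hUτ : wordMap β U β⁻¹ < τ) (n : ℕ) :
    ∑ p ∈ antidiagonal n, (wordsOfLength (freeWords β τ) p.1).card *
        (wordsOfLength (freeWords β τ) p.2).card ≤
      (wordsOfLength (blocks β t) (n + U.length)).card := by
  simp_rw [← Finset.card_product]
  rw [← Finset.card_sigma]
  refine Finset.card_le_card_of_injOn (fun z => z.2.1 ++ (U ++ z.2.2)) ?_ ?_
  · rintro ⟨p, A, B⟩ hz
    simp only [Finset.mem_coe, Finset.mem_sigma, Finset.mem_product,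
      Finset.HasAntidiagonal.mem_antidiagonal, mem_wordsOfLength] at hz
    obtain ⟨hp, ⟨hA, hlenA⟩, hB, hlenB⟩ := hz
    refine mem_wordsOfLength.mpr ⟨append_separator_mem_blocks hβ ht hτ hU hUτ hA hB, ?_⟩
    simp only [List.length_append]
    lia
  · rintro ⟨⟨_, _⟩, A, B⟩ hz ⟨⟨_, _⟩, A', B'⟩ hz' h
    simp only [Finset.mem_coe, Finset.mem_sigma, Finset.mem_product,
      Finset.HasAntidiagonal.mem_antidiagonal, mem_wordsOfLength] at hz hz'
    obtain ⟨-, ⟨hA, rfl⟩, hB, rfl⟩ := hz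
    obtain ⟨-, ⟨hA', rfl⟩, hB', rfl⟩ := hz'
    obtain ⟨rfl, rfl⟩ := append_separator_inj hβ hUτ hA hB hA' hB' h
    rfl

end Counting

section Bifurcation

open scoped Topology

variable {β t t' : ℝ} {m : ℕ}

lemma tendsto_fract_nhdsGE {α : Type*} [Ring α] [LinearOrder α] [IsStrictOrderedRing α]
    [FloorRing α] [TopologicalSpace α] [OrderTopology α] [IsTopologicalAddGroup α] (x : α) :
    Tendsto Int.fract (𝓝[≥] x) (𝓝[≥] Int.fract x) := by
  have hshift : Tendsto (fun y => y - (⌊x⌋ : α)) (𝓝[≥] x) (𝓝[≥] (x - ⌊x⌋)) :=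
    (continuous_sub_right _).continuousWithinAt.tendsto_nhdsWithin fun _ hy => sub_le_sub_right hy _
  refine hshift.congr' ?_
  filter_upwards [tendsto_pure.mp (tendsto_floor_right_pure_floor x)] with y hy
  rw [← hy, Int.self_sub_floor]

lemma tendsto_Tbeta_nhdsGE (hβ : 0 ≤ β) (x : ℝ) :
    Tendsto (Tbeta β) (𝓝[≥] x) (𝓝[≥] Tbeta β x) :=
  (tendsto_fract_nhdsGE (β * x)).comp <|
    (continuous_const_mul β).continuousWithinAt.tendsto_nhdsWithin
      fun _ hy => mul_le_mul_of_nonneg_left hy hβ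

lemma tendsto_iterate_Tbeta_nhdsGE (hβ : 0 ≤ β) (n : ℕ) (x : ℝ) :
    Tendsto (Tbeta β)^[n] (𝓝[≥] x) (𝓝[≥] (Tbeta β)^[n] x) := by
  induction n generalizing x with
  | zero => exact tendsto_id
  | succ n ih => exact (ih _).comp (tendsto_Tbeta_nhdsGE hβ x)

lemma mem_Kset_self_of_mem_Eset (hβ : 0 ≤ β) (ht : t ∈ Eset β) : t ∈ Kset β t := by
  refine ⟨ht.1, fun n => ?_⟩
  by_contra! hn
  have hlt : ∀ᶠ x in 𝓝[≥] t, (Tbeta β)^[n] x < t :=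
    (tendsto_iterate_Tbeta_nhdsGE hβ n t).mono_right nhdsWithin_le_nhds |>.eventually_lt_const hn
  obtain ⟨u, htu, hu⟩ := (mem_nhdsGE_iff_exists_Ico_subset' ht.1.2).mp hlt
  obtain ⟨t', htt', ht'⟩ := exists_between (lt_min (mem_Ioi.mp htu) ht.1.2)
  obtain ⟨ht'u, ht'1⟩ := lt_min_iff.mp ht'
  refine ht.2 t' htt' ht'1 ((Kset_antitone htt'.le).antisymm fun x hx => ⟨hx.1, fun k => ?_⟩)
  by_contra! hk
  have hreturn : (Tbeta β)^[n] ((Tbeta β)^[k] x) < t := hu ⟨hx.2 k, hk.trans ht'u⟩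
  exact hreturn.not_ge ((iterate_Tbeta_mem_Kset hx k).2 n)

lemma iterate_Tbeta_eq_pow_mul_sub (h0 : 0 < β) (h2 : β ≤ 2) {j : ℕ} {x : ℝ}
    (hx : x ∈ Ico (onesValue β j) 1) : (Tbeta β)^[j] x = β ^ j * (x - onesValue β j) := by
  induction j with
  | zero => simp
  | succ j ih =>
    have hj : onesValue β j ≤ x := (onesValue_strictMono h0 j.lt_succ_self).le.trans hx.1
    have hlt := (iterate_Tbeta_mem_Ico (β := β) ⟨(onesValue_nonneg h0 j).trans hj, hx.2⟩ j).2
    have hstep : β * (Tbeta β)^[j] x - β ^ (j + 1) * (x - onesValue β (j + 1)) = 1 :=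
      calc β * (Tbeta β)^[j] x - β ^ (j + 1) * (x - onesValue β (j + 1))
          = β ^ (j + 1) * (onesValue β (j + 1) - onesValue β j) := by
            rw [ih ⟨hj, hx.2⟩]
            ring
        _ = 1 := by rw [onesValue_succ_sub, mul_inv_cancel₀ (pow_pos h0 _).ne']
    rw [Function.iterate_succ_apply', Tbeta, Int.fract_eq_iff]
    exact ⟨mul_nonneg (pow_pos h0 _).le (sub_nonneg.mpr hx.1), by nlinarith, 1,
      by simpa using hstep⟩

lemma iterate_Tbeta_lt_inv (h0 : 0 < β) (h2 : β ≤ 2) {j : ℕ} {x : ℝ}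
    (hx : x ∈ Ico (onesValue β j) (onesValue β (j + 1))) (hx1 : x < 1) :
    (Tbeta β)^[j] x < β⁻¹ :=
  calc (Tbeta β)^[j] x = β ^ j * (x - onesValue β j) :=
        iterate_Tbeta_eq_pow_mul_sub h0 h2 ⟨hx.1, hx1⟩
    _ < β ^ j * (onesValue β (j + 1) - onesValue β j) := by
        gcongr
        exact hx.2
    _ = β⁻¹ := by
        rw [onesValue_succ_sub, pow_succ]
        field_simp

/-- From the left, `T_β` maps `β⁻¹` to `1`, and the orbit `1, onesValue β m, …, onesValue β 1 = β⁻¹`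
of `1` closes up after `m` more steps. -/
lemma inv_sub_iterate_Tbeta (h0 : 0 < β) (hm : onesValue β (m + 1) = 1) {y : ℝ}
    (hy : y ∈ Ico (1 - β⁻¹) β⁻¹) :
    β⁻¹ - (Tbeta β)^[m + 1] y = β ^ (m + 1) * (β⁻¹ - y) := by
  have hem := onesValue_eq_sub_one h0 hm
  have hlow : onesValue β m ≤ β * y := by
    rw [hem]
    nlinarith [hy.1, mul_inv_cancel₀ h0.ne']
  have hup : β * y < 1 := (mul_lt_mul_of_pos_left hy.2 h0).trans_eq (mul_inv_cancel₀ h0.ne')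
  have hT : Tbeta β y = β * y := Int.fract_eq_self.mpr ⟨(onesValue_nonneg h0 m).trans hlow, hup⟩
  have hgap : onesValue β m = 1 - (β ^ (m + 1))⁻¹ := by linarith [onesValue_succ_sub (β := β) m]
  rw [Function.iterate_succ_apply, hT, iterate_Tbeta_eq_pow_mul_sub h0
    (lt_two_of_onesValue_eq_one h0 hm).le ⟨hlow, hup⟩, hgap]
  field_simp
  ring

lemma Kset_eq_empty (hβ : 1 < β) (hm : onesValue β (m + 1) = 1) (ht : 1 - β⁻¹ ≤ t) :
    Kset β t = ∅ := by
  have h0 : 0 < β := by positivity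
  have hbound : ∀ k : ℕ, ∀ y ∈ Kset β t, y < β⁻¹ → (β ^ (m + 1)) ^ k * (β⁻¹ - y) ≤ β⁻¹ := by
    intro k
    induction k with
    | zero =>
      intro y hy _
      linarith [hy.1.1]
    | succ k ih =>
      intro y hy hyβ
      have hstep := inv_sub_iterate_Tbeta (y := y) h0 hm ⟨ht.trans (hy.2 0), hyβ⟩
      have hpos : 0 < β ^ (m + 1) * (β⁻¹ - y) := mul_pos (pow_pos h0 _) (sub_pos.mpr hyβ)
      rw [pow_succ, mul_assoc, ← hstep]
      exact ih _ (iterate_Tbeta_mem_Kset hy _) (by linarith)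
  refine eq_empty_of_forall_notMem fun x hx => ?_
  obtain ⟨j, -, hj⟩ := exists_mem_Ico_onesValue hm hx.1
  have hlt := iterate_Tbeta_lt_inv h0 (lt_two_of_onesValue_eq_one h0 hm).le hj hx.1.2
  obtain ⟨k, hk⟩ := pow_unbounded_of_one_lt (β⁻¹ / (β⁻¹ - (Tbeta β)^[j] x))
    (one_lt_pow₀ hβ m.succ_ne_zero)
  rw [div_lt_iff₀ (sub_pos.mpr hlt)] at hk
  exact hk.not_ge (hbound k _ (iterate_Tbeta_mem_Kset hx j) hlt)

lemma lt_one_sub_inv_of_mem_Kset (hβ : 1 < β) (hm : onesValue β (m + 1) = 1) {x : ℝ}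
    (hx : x ∈ Kset β t) : t < 1 - β⁻¹ := by
  by_contra! ht
  simp [Kset_eq_empty hβ hm ht] at hx

lemma exists_mem_blocks (hβ : 1 < β) (hm : onesValue β (m + 1) = 1) (ht : t < 1 - β⁻¹) :
    ∃ w, w ∈ blocks β t := by
  have h0 : 0 < β := by positivity
  have hβ2 := lt_two_of_onesValue_eq_one h0 hm
  have hem := onesValue_eq_sub_one h0 hm
  obtain _ | m := m
  · rw [onesValue_zero] at hem
    linarith
  have hgap := sub_pos.mpr (onesValue_strictMono h0 m.lt_succ_self)
  obtain ⟨q, hq⟩ := exists_pow_lt_of_lt_one (lt_min hgap (sub_pos.mpr ht))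
    (inv_lt_one_of_one_lt₀ hβ)
  rw [inv_pow, lt_min_iff, hem] at hq
  have hpos : 0 < (β ^ q)⁻¹ := by positivity
  have htail : Shadows β t 0 (β - 1 - (β ^ q)⁻¹) (tailWord (m + 1) m q) :=
    shadows_tailWord hβ hm ht.le le_rfl m.le_succ (by linarith) (by rw [hem, sub_zero])
  have hlow : t ≤ (β - 1 - (β ^ q)⁻¹) / β := by
    rw [le_div_iff₀ h0]
    nlinarith [inv_mul_cancel₀ h0.ne']
  have hnonneg : 0 ≤ β - 1 - (β ^ q)⁻¹ := by linarith [onesValue_nonneg h0 m]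
  have hlt : (β - 1 - (β ^ q)⁻¹) / β < 1 := by
    rw [div_lt_one h0]
    linarith
  have hword := htail.cons hβ hm le_rfl false ⟨hnonneg, by linarith⟩ (by simpa using hlow)
    (by simpa using hlt)
  refine ⟨false :: tailWord (m + 1) m q, by simpa using hword.admissible, ?_⟩
  rw [wordMap_cons, wordMap_tailWord_inv hm, hem, Bool.toNat_false, Nat.cast_zero, zero_add,
    inv_eq_one_div, div_lt_div_iff_of_pos_right h0]
  linarith

lemma Kset_nonempty (hβ : 1 < β) (hm : onesValue β (m + 1) = 1) (ht : t < 1 - β⁻¹) :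
    (Kset β t).Nonempty := by
  obtain ⟨w, hw⟩ := exists_mem_blocks hβ hm ht
  exact ⟨_, blockPoint_mem_Kset hβ (ω := fun _ => w) fun _ => mem_wordsOfLength.mpr ⟨hw, rfl⟩⟩

lemma exists_rpow_dimH_pow_lt_card_blocks (hβ : 1 < β) (hm : onesValue β (m + 1) = 1)
    (ht : t ∈ Kset β t) (htt' : t < t') (ht' : t' < 1 - β⁻¹) :
    ∃ L, (β ^ (dimH (Kset β t')).toReal) ^ L < (wordsOfLength (blocks β t) L).card := by
  have h0 : 0 < β := by positivity
  obtain ⟨τ, htτ, hτt'⟩ := exists_between htt'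
  obtain ⟨q, hq⟩ := exists_pow_lt_of_lt_one (sub_pos.mpr hτt') (inv_lt_one_of_one_lt₀ hβ)
  rw [inv_pow] at hq
  obtain ⟨U, hU, hUτ⟩ := exists_admissible_wordMap_lt hβ hm ht (htt'.trans ht').le htτ
  refine exists_pow_lt_of_sum_antidiagonal_le
    (s := Finset.range (m + 1) ×ˢ Finset.range (m + 1))
    (ℓ := fun p => (extendWord m q p []).length) (u := U.length) (Real.rpow_pos_of_pos h0 _)
    (a := fun n => (wordsOfLength (freeWords β τ) n).card) (fun n => Nat.cast_nonneg _)
    (fun n => ?_) fun n => ?_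
  · refine (rpow_dimH_pow_le_card_language hβ (lt_two_of_onesValue_eq_one h0 hm).le
      (Kset_nonempty hβ hm ht') n).trans ?_
    exact_mod_cast card_language_le_sum_card_freeWords hβ hm ht'.le hq.le n
  · exact_mod_cast sum_card_freeWords_mul_le_card_blocks h0 htτ.le
      (by linarith [one_sub_inv_le_inv h0 hm]) hU hUτ n

theorem dimH_Kset_lt_dimH_Kset (hβ : 1 < β) (hm : onesValue β (m + 1) = 1)
    (ht : t ∈ Kset β t) (htt' : t < t') : dimH (Kset β t') < dimH (Kset β t) := by
  have h0 : 0 < β := by positivity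
  obtain ⟨τ, htτ, hτ⟩ := exists_between (lt_min htt' (lt_one_sub_inv_of_mem_Kset hβ hm ht))
  obtain ⟨hτt', hτ⟩ := lt_min_iff.mp hτ
  obtain ⟨L, hL⟩ := exists_rpow_dimH_pow_lt_card_blocks hβ hm ht htτ hτ
  have hcard : (0 : ℝ) < (wordsOfLength (blocks β t) L).card :=
    (pow_pos (Real.rpow_pos_of_pos h0 _) L).trans hL
  obtain ⟨w, hw⟩ := Finset.card_pos.mp (Nat.cast_pos.mp hcard)
  rw [Real.rpow_pow_comm h0.le, ← Real.lt_logb_iff_rpow_lt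
    (one_lt_pow₀ hβ (pos_of_mem_wordsOfLength_blocks hw).ne') hcard] at hL
  calc dimH (Kset β t') ≤ dimH (Kset β τ) := dimH_mono (Kset_antitone hτt'.le)
    _ = ENNReal.ofReal (dimH (Kset β τ)).toReal :=
        (ENNReal.ofReal_toReal (dimH_Kset_ne_top β τ)).symm
    _ < ENNReal.ofReal (Real.logb (β ^ L) (wordsOfLength (blocks β t) L).card) :=
        (ENNReal.ofReal_lt_ofReal_iff_of_nonneg ENNReal.toReal_nonneg).mpr hL
    _ ≤ dimH (Kset β t) := le_dimH_Kset_of_blocks hβ t L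

end Bifurcation

/-- For a multinacci `β ∈ (1,2)`, the dimension bifurcation set
coincides with the set-valued bifurcation set: `B_β = E_β`. -/
theorem stmt_0 (β : ℝ) (hβ : β ∈ Set.Ioo (1 : ℝ) 2) (hmulti : IsMultinacci β) :
    Bset β = Eset β := by
  have h0 : 0 < β := zero_lt_one.trans hβ.1
  obtain ⟨m, hm⟩ := hmulti.exists_onesValue_eq_one h0
  refine Subset.antisymm
    (fun t ht => ⟨ht.1, fun t' htt' ht' hK => ht.2 t' htt' ht' (congrArg dimH hK)⟩)
    fun t ht => ⟨ht.1, fun t' htt' _ => ?_⟩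
  exact (dimH_Kset_lt_dimH_Kset hβ.1 hm (mem_Kset_self_of_mem_Eset h0.le ht) htt').ne
end

section
/- Let β ∈ (1,2) be a multinacci number. Then B_β = {t ∈ [0,1) : lim_{r→0⁺} dim_H(B_β ∩ (t, t+r)) = dim_H K_β(t) and dim_H K_β(t) > 0}. -/
open Set Filter MeasureTheory

/-!
In base `β = 1 / q` with `q + ⋯ + q^{m+1} = 1`, the greedy expansions are the binary sequences
`1^{x 0} 0 1^{x 1} 0 ⋯` with all `x i ≤ m` and infinitely many `x i < m`. A number thus has a
*code* `x`, codes are ordered lexicographically like the numbers, and surviving above the number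
coded by `0, b 0, b 1, …` means that all shifts of `x` except `x` itself are at least `b`.

Let `V_q` be `1` minus the value of a code, a power series in `q` that makes sense for all
`q ∈ (0, 1)`, and let `κ` be minimal among its shifts. On the survivors of `κ`, the distance of
two points under `V_p` is comparable to `p` raised to the position where their codes part, provided
`V_p κ < 1`; the images under different parameters `p` and `q` are therefore Hölder equivalent, with
exponent `log_p q`. At the root `ρ` of `V_ρ κ = 1` the image is the whole interval `(0, 1]`, so the
dimension for the parameter `q` is `log_q ρ`.

As `ρ` increases with `κ` and depends continuously on it from the right, the dimension drops
strictly at every minimal code and is right continuous there. A nonminimal `b` can be enlarged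
without changing its survivors, so `B_β` consists of the numbers coded by `0, κ 0, κ 1, …` with
`κ` minimal. Finally, if `e > κ` is minimal and `y` survives `e`, then for suitable large `N` the
code `κ 0, …, κ (N - 1), κ N + 1, y 0, y 1, …` is minimal and close to `κ`: `B_β` contains affine
copies of the survivors of `e` arbitrarily close to the right of each of its points. Outside
`B_β`, the dimension is constant on some `[t, t')`, which therefore contains no point of `B_β`.
-/

namespace Multinacci

section General

theorem nonpos_of_forall_exists_le_mul {ι : Type*} {f : ι → ℝ} {q : ℝ} (hf : BddAbove (range f))
    (hq₀ : 0 ≤ q) (hq₁ : q < 1) (h : ∀ a, ∃ b, f a ≤ q * f b) (a : ι) : f a ≤ 0 := by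
  have : Nonempty ι := ⟨a⟩
  have hsup : ⨆ b, f b ≤ q * ⨆ b, f b := ciSup_le fun b => by
    obtain ⟨c, hc⟩ := h b
    exact hc.trans (mul_le_mul_of_nonneg_left (le_ciSup hf c) hq₀)
  have := le_ciSup hf a
  nlinarith

theorem toLex_lt_toLex {α : Type*} [LT α] {x y : ℕ → α} :
    toLex x < toLex y ↔ ∃ n, (∀ i < n, x i = y i) ∧ x n < y n :=
  Iff.rfl

theorem toLex_lt_of_agree_of_le {α : Type*} [PartialOrder α] {κ x y z : ℕ → α} {k : ℕ}
    (hyz : ∀ i < k, y i = z i) (hk : y k < z k) (hκy : toLex κ ≤ toLex y)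
    (hx : ∀ i ≤ k, x i = κ i) : toLex x < toLex z := by
  rcases hκy.eq_or_lt with h | h
  · obtain rfl : κ = y := h
    exact ⟨k, fun i hi => (hx i hi.le).trans (hyz i hi), (hx k le_rfl).trans_lt hk⟩
  obtain ⟨l, hagree, hl⟩ := toLex_lt_toLex.1 h
  rcases lt_or_ge l k with hlk | hkl
  · refine ⟨l, fun i hi => ?_, (hx l hlk.le).trans_lt (hl.trans_eq (hyz l hlk))⟩
    exact (hx i (hi.trans hlk).le).trans ((hagree i hi).trans (hyz i (hi.trans hlk)))
  · refine ⟨k, fun i hi => (hx i hi.le).trans ((hagree i (hi.trans_le hkl)).trans (hyz i hi)), ?_⟩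
    refine ((hx k le_rfl).trans_le ?_).trans_lt hk
    rcases hkl.eq_or_lt with rfl | hkl
    exacts [hl.le, (hagree k hkl).le]

theorem toLex_lt_of_forall_le {α : Type*} [PartialOrder α] {x y : ℕ → α} {n : ℕ}
    (h : ∀ i < n, x i ≤ y i) (hn : x n < y n) : toLex x < toLex y := by
  classical
  have hex : ∃ i, x i ≠ y i := ⟨n, hn.ne⟩
  refine ⟨Nat.find hex, fun i hi => not_not.1 (Nat.find_min hex hi), ?_⟩
  rcases (Nat.find_min' hex hn.ne).lt_or_eq with hlt | heq
  · exact (h _ hlt).lt_of_ne (Nat.find_spec hex)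
  · rwa [heq]

theorem agree_of_toLex_le_of_toLex_le {α : Type*} [PartialOrder α] {x y z : ℕ → α} {n : ℕ}
    (hxy : toLex x ≤ toLex y) (hyz : toLex y ≤ toLex z) (h : ∀ i < n, x i = z i) :
    ∀ i < n, y i = x i := by
  by_contra! hne
  rcases hxy.eq_or_lt with h' | h'
  · obtain rfl : x = y := h'
    simp at hne
  obtain ⟨k, hagree, hk⟩ := toLex_lt_toLex.1 h'
  obtain ⟨i, hi, hne⟩ := hne
  have hkn : k < n := (not_lt.1 fun hik => hne (hagree i hik).symm).trans_lt hi
  exact hyz.not_gt ⟨k, fun j hj => (h j (hj.trans hkn)).symm.trans (hagree j hj),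
    (h k hkn).symm.trans_lt hk⟩

theorem dimH_image_le_of_dist_le_mul_rpow {X Y Z : Type*} [MetricSpace Y] [MetricSpace Z]
    {f : X → Y} {g : X → Z} {s : Set X} {C r : ℝ} (hr : 0 < r)
    (h : ∀ x ∈ s, ∀ y ∈ s, dist (f x) (f y) ≤ C * dist (g x) (g y) ^ r) :
    dimH (f '' s) ≤ dimH (g '' s) / ENNReal.ofReal r := by
  rcases s.eq_empty_or_nonempty with rfl | ⟨x₀, -⟩
  · simp
  have : Nonempty X := ⟨x₀⟩
  let φ : Z → Y := fun z => f (Function.invFunOn g s z)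
  have hφ : ∀ x ∈ s, φ (g x) = f x := fun x hx => by
    have hmem : Function.invFunOn g s (g x) ∈ s := Function.invFunOn_apply_mem hx
    have heq : g (Function.invFunOn g s (g x)) = g x := Function.invFunOn_apply_eq hx
    have hle := h _ hmem _ hx
    rw [heq, dist_self, Real.zero_rpow hr.ne', mul_zero] at hle
    exact dist_le_zero.1 hle
  have himage : f '' s = φ '' (g '' s) := by
    rw [image_image]
    exact (image_congr hφ).symm
  have hholder : HolderOnWith C.toNNReal r.toNNReal φ (g '' s) := by
    rintro _ ⟨x, hx, rfl⟩ _ ⟨y, hy, rfl⟩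
    rw [hφ x hx, hφ y hy, edist_dist, edist_dist, Real.coe_toNNReal r hr.le,
      ENNReal.ofReal_rpow_of_nonneg dist_nonneg hr.le]
    exact (ENNReal.ofReal_le_ofReal (h x hx y hy)).trans
      (ENNReal.ofReal_mul' (Real.rpow_nonneg dist_nonneg r)).le
  rw [himage]
  exact hholder.dimH_image_le (Real.toNNReal_pos.2 hr)

theorem dimH_image_const_add_mul {a : ℝ} (c : ℝ) (ha : a ≠ 0) (s : Set ℝ) :
    dimH ((fun x => c + a * x) '' s) = dimH s := by
  have : (fun x => c + a * x) '' s = IsometryEquiv.addLeft c ''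
      (ContinuousLinearEquiv.smulLeft (R₁ := ℝ) (M₁ := ℝ) (Units.mk0 a ha) '' s) := by
    rw [image_image]
    rfl
  rw [this, IsometryEquiv.dimH_image, ContinuousLinearEquiv.dimH_image]

end General

/-- The codes of greedy expansions: `x` stands for the binary sequence `1^{x 0} 0 1^{x 1} 0 ⋯`,
which has no `m + 1` consecutive ones and does not end in `(1^m 0)^∞`. -/
def codes (m : ℕ) : Set (ℕ → ℕ) := {x | (∀ i, x i ≤ m) ∧ ∃ᶠ n in atTop, x n < m}

/-- The sum `q^{k+2} + ⋯ + q^{m+1}`: what the block `1^k 0` falls short of the block `1^{m+1}`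
in base `1 / q`, the digit `0` that closes the block being left out of account. -/
noncomputable def tailWeight (m : ℕ) (q : ℝ) (k : ℕ) : ℝ := ∑ i ∈ Finset.Ico (k + 2) (m + 2), q ^ i

/-- The position at which the `n`-th block `1^{x n} 0` of the sequence coded by `x` begins. -/
def blockStart (x : ℕ → ℕ) (n : ℕ) : ℕ := ∑ i ∈ Finset.range n, (x i + 1)

/-- The covalue of a code. If `q + ⋯ + q^{m+1} = 1`, it is `1` minus the number with expansion
`1^{x 0} 0 1^{x 1} 0 ⋯` in base `1 / q`; for other `q` it only serves to deform the base. -/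
noncomputable def covalue (m : ℕ) (q : ℝ) (x : ℕ → ℕ) : ℝ :=
  ∑' j, q ^ blockStart x j * tailWeight m q (x j)

/-- The codes all of whose shifts are lexicographically at least `b`. -/
def survivors (m : ℕ) (b : ℕ → ℕ) : Set (ℕ → ℕ) :=
  {x | x ∈ codes m ∧ ∀ n, toLex b ≤ toLex (shiftN n x)}

/-- The codes that are lexicographically minimal among their shifts. -/
def minimalCodes (m : ℕ) : Set (ℕ → ℕ) := {κ | κ ∈ survivors m κ}

section Codes

variable {m : ℕ} {b x : ℕ → ℕ}

@[simp]
theorem shiftN_zero (x : ℕ → ℕ) : shiftN 0 x = x := rfl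

@[simp]
theorem shiftN_shiftN (i j : ℕ) (x : ℕ → ℕ) : shiftN i (shiftN j x) = shiftN (i + j) x := by
  funext n
  simp only [shiftN, add_assoc]

theorem shiftN_mem_codes (hx : x ∈ codes m) (n : ℕ) : shiftN n x ∈ codes m := by
  refine ⟨fun i => hx.1 _, ?_⟩
  have := hx.2
  rw [← map_add_atTop_eq_nat n] at this
  exact this

theorem shiftN_mem_survivors (hx : x ∈ survivors m b) (n : ℕ) : shiftN n x ∈ survivors m b :=
  ⟨shiftN_mem_codes hx.1 n, fun i => by simpa only [shiftN_shiftN] using hx.2 (i + n)⟩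

theorem survivors_antitone {a : ℕ → ℕ} (hab : toLex a ≤ toLex b) :
    survivors m b ⊆ survivors m a :=
  fun _ hx => ⟨hx.1, fun n => hab.trans (hx.2 n)⟩

theorem mem_survivors_of_minimal {κ : ℕ → ℕ} (hκ : κ ∈ minimalCodes m) (h : toLex b ≤ toLex κ) :
    κ ∈ survivors m b :=
  survivors_antitone h hκ

end Codes

section Covalue

variable {m : ℕ} {q : ℝ}

theorem tailWeight_nonneg (hq : 0 ≤ q) (k : ℕ) : 0 ≤ tailWeight m q k :=
  Finset.sum_nonneg fun _ _ => by positivity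

theorem tailWeight_le (hq₀ : 0 ≤ q) (hq₁ : q ≤ 1) (k : ℕ) : tailWeight m q k ≤ m :=
  calc tailWeight m q k ≤ ∑ _i ∈ Finset.Ico (k + 2) (m + 2), (1 : ℝ) :=
        Finset.sum_le_sum fun _ _ => pow_le_one₀ hq₀ hq₁
    _ ≤ m := by simp

theorem tailWeight_pos (hq : 0 < q) {k : ℕ} (hk : k < m) : 0 < tailWeight m q k :=
  Finset.sum_pos (fun _ _ => by positivity) (by simpa using hk)

@[simp]
theorem tailWeight_self : tailWeight m q m = 0 := by simp [tailWeight]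

theorem tailWeight_eq_add {k : ℕ} (hk : k < m) :
    tailWeight m q k = q ^ (k + 2) + tailWeight m q (k + 1) :=
  Finset.sum_eq_sum_Ico_succ_bot (by omega) _

theorem pow_le_tailWeight_sub (hq : 0 ≤ q) {k l : ℕ} (hkl : k < l) (hl : l ≤ m) :
    q ^ (l + 1) ≤ tailWeight m q k - tailWeight m q l := by
  have hsplit : ∑ i ∈ Finset.Ico (k + 2) (l + 2), q ^ i + tailWeight m q l = tailWeight m q k :=
    Finset.sum_Ico_consecutive _ (by omega) (by omega)
  have hlast : q ^ (l + 1) ≤ ∑ i ∈ Finset.Ico (k + 2) (l + 2), q ^ i :=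
    Finset.single_le_sum (f := (q ^ ·)) (fun _ _ => by positivity) (by simp; omega)
  linarith

theorem blockStart_succ (x : ℕ → ℕ) (n : ℕ) :
    blockStart x (n + 1) = blockStart x n + (x n + 1) :=
  Finset.sum_range_succ _ _

theorem blockStart_add (x : ℕ → ℕ) (n j : ℕ) :
    blockStart x (j + n) = blockStart x n + blockStart (shiftN n x) j := by
  rw [add_comm j n, blockStart, Finset.sum_range_add]
  simp only [blockStart, shiftN, add_comm n]

theorem le_blockStart (x : ℕ → ℕ) (n : ℕ) : n ≤ blockStart x n := by
  simp [blockStart, Finset.sum_add_distrib]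

theorem blockStart_congr {x y : ℕ → ℕ} {n : ℕ} (h : ∀ i < n, x i = y i) :
    blockStart x n = blockStart y n :=
  Finset.sum_congr rfl fun i hi => by rw [h i (Finset.mem_range.1 hi)]

theorem covalue_term_nonneg (hq : 0 ≤ q) (x : ℕ → ℕ) (j : ℕ) :
    0 ≤ q ^ blockStart x j * tailWeight m q (x j) :=
  mul_nonneg (by positivity) (tailWeight_nonneg hq _)

theorem covalue_term_le (hq₀ : 0 ≤ q) (hq₁ : q ≤ 1) (x : ℕ → ℕ) (j : ℕ) :
    q ^ blockStart x j * tailWeight m q (x j) ≤ m * q ^ j := by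
  rw [mul_comm (m : ℝ)]
  exact mul_le_mul (pow_le_pow_of_le_one hq₀ hq₁ (le_blockStart x j)) (tailWeight_le hq₀ hq₁ _)
    (tailWeight_nonneg hq₀ _) (by positivity)

theorem summable_mul_geometric (c : ℝ) (hq : q ∈ Ioo (0 : ℝ) 1) :
    Summable fun j : ℕ => c * q ^ j :=
  (summable_geometric_of_lt_one hq.1.le hq.2).mul_left c

theorem summable_covalue (hq : q ∈ Ioo (0 : ℝ) 1) (x : ℕ → ℕ) :
    Summable fun j => q ^ blockStart x j * tailWeight m q (x j) :=
  .of_nonneg_of_le (covalue_term_nonneg hq.1.le x) (covalue_term_le hq.1.le hq.2.le x)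
    (summable_mul_geometric _ hq)

theorem covalue_nonneg (hq : 0 ≤ q) (x : ℕ → ℕ) : 0 ≤ covalue m q x :=
  tsum_nonneg (covalue_term_nonneg hq x)

theorem covalue_le (hq : q ∈ Ioo (0 : ℝ) 1) (x : ℕ → ℕ) : covalue m q x ≤ m / (1 - q) := by
  rw [div_eq_mul_inv, ← tsum_geometric_of_lt_one hq.1.le hq.2, ← tsum_mul_left]
  exact (summable_covalue hq x).tsum_le_tsum (covalue_term_le hq.1.le hq.2.le x)
    (summable_mul_geometric _ hq)

theorem covalue_pos (hq : q ∈ Ioo (0 : ℝ) 1) {x : ℕ → ℕ} (hx : x ∈ codes m) :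
    0 < covalue m q x := by
  obtain ⟨n, hn⟩ := hx.2.exists
  exact (summable_covalue hq x).tsum_pos (covalue_term_nonneg hq.1.le x) n
    (mul_pos (pow_pos hq.1 _) (tailWeight_pos hq.1 hn))

theorem covalue_eq_sum_add (hq : q ∈ Ioo (0 : ℝ) 1) (x : ℕ → ℕ) (n : ℕ) :
    covalue m q x = ∑ j ∈ Finset.range n, q ^ blockStart x j * tailWeight m q (x j) +
      q ^ blockStart x n * covalue m q (shiftN n x) := by
  rw [covalue, ← (summable_covalue hq x).sum_add_tsum_nat_add n, covalue, ← tsum_mul_left]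
  simp only [blockStart_add, pow_add, mul_assoc, shiftN]

theorem covalue_eq (hq : q ∈ Ioo (0 : ℝ) 1) (x : ℕ → ℕ) :
    covalue m q x = tailWeight m q (x 0) + q ^ (x 0 + 1) * covalue m q (shiftN 1 x) := by
  simpa [blockStart] using covalue_eq_sum_add hq x 1

theorem covalue_sub_of_agree (hq : q ∈ Ioo (0 : ℝ) 1) {x y : ℕ → ℕ} {n : ℕ}
    (h : ∀ i < n, x i = y i) : covalue m q x - covalue m q y =
      q ^ blockStart x n * (covalue m q (shiftN n x) - covalue m q (shiftN n y)) := by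
  have hsum : ∑ j ∈ Finset.range n, q ^ blockStart x j * tailWeight m q (x j) =
      ∑ j ∈ Finset.range n, q ^ blockStart y j * tailWeight m q (y j) :=
    Finset.sum_congr rfl fun j hj => by
      rw [Finset.mem_range] at hj
      rw [h j hj, blockStart_congr fun i hi => h i (hi.trans hj)]
  rw [covalue_eq_sum_add hq x n, covalue_eq_sum_add hq y n, hsum, blockStart_congr h]
  ring

theorem abs_covalue_sub_le (hq : q ∈ Ioo (0 : ℝ) 1) {x y : ℕ → ℕ} {n : ℕ}
    (h : ∀ i < n, x i = y i) :
    |covalue m q x - covalue m q y| ≤ m / (1 - q) * q ^ blockStart x n := by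
  rw [covalue_sub_of_agree hq h, abs_mul, abs_of_nonneg (pow_nonneg hq.1.le _), mul_comm]
  refine mul_le_mul_of_nonneg_right ?_ (pow_nonneg hq.1.le _)
  exact abs_sub_le_of_nonneg_of_le (covalue_nonneg hq.1.le _) (covalue_le hq _)
    (covalue_nonneg hq.1.le _) (covalue_le hq _)

theorem exists_forall_agree_abs_covalue_sub_lt (m : ℕ) (hq : q ∈ Ioo (0 : ℝ) 1) {ε : ℝ}
    (hε : 0 < ε) : ∃ n, ∀ x y : ℕ → ℕ, (∀ i < n, x i = y i) →
      |covalue m q x - covalue m q y| < ε := by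
  have hlim : Tendsto (fun n : ℕ => m / (1 - q) * q ^ n) atTop (nhds 0) := by
    simpa using (tendsto_pow_atTop_nhds_zero_of_lt_one hq.1.le hq.2).const_mul (m / (1 - q))
  obtain ⟨n, hn⟩ := (hlim.eventually_lt_const hε).exists
  refine ⟨n, fun x y h => (abs_covalue_sub_le hq h).trans_lt (lt_of_le_of_lt ?_ hn)⟩
  have : 0 ≤ m / (1 - q) := div_nonneg m.cast_nonneg (sub_nonneg.2 hq.2.le)
  exact mul_le_mul_of_nonneg_left (pow_le_pow_of_le_one hq.1.le hq.2.le (le_blockStart x n)) this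

theorem le_covalue_sub (hq : q ∈ Ioo (0 : ℝ) 1) {x y : ℕ → ℕ} {n : ℕ}
    (h : ∀ i < n, x i = y i) (hn : x n < y n) (hy : y n ≤ m) :
    q ^ blockStart x n * (q ^ (x n + 1) * covalue m q (shiftN (n + 1) x) +
      q ^ (y n + 1) * (1 - covalue m q (shiftN (n + 1) y))) ≤ covalue m q x - covalue m q y := by
  rw [covalue_sub_of_agree hq h]
  refine mul_le_mul_of_nonneg_left ?_ (pow_nonneg hq.1.le _)
  have hx₁ := covalue_eq (m := m) hq (shiftN n x)
  have hy₁ := covalue_eq (m := m) hq (shiftN n y)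
  rw [shiftN_shiftN, add_comm 1] at hx₁ hy₁
  have hdigit := pow_le_tailWeight_sub hq.1.le hn hy
  simp only [shiftN, zero_add] at hx₁ hy₁ ⊢
  linarith

theorem covalue_lt_of_toLex_lt (hq : q ∈ Ioo (0 : ℝ) 1) {x y : ℕ → ℕ} (hx : x ∈ codes m)
    (hy : ∀ i, y i ≤ m) (hle : ∀ n, covalue m q (shiftN n y) ≤ 1) (hlt : toLex x < toLex y) :
    covalue m q y < covalue m q x := by
  obtain ⟨n, hagree, hn⟩ := toLex_lt_toLex.1 hlt
  have hpos : 0 < q ^ blockStart x n * (q ^ (x n + 1) * covalue m q (shiftN (n + 1) x) +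
      q ^ (y n + 1) * (1 - covalue m q (shiftN (n + 1) y))) := by
    have := hq.1
    have := covalue_pos hq (shiftN_mem_codes hx (n + 1))
    have := sub_nonneg.2 (hle (n + 1))
    positivity
  linarith [le_covalue_sub hq hagree hn (hy n)]

theorem exists_mem_survivors_covalue_le (hq : q ∈ Ioo (0 : ℝ) 1) {κ y : ℕ → ℕ}
    (hy : y ∈ survivors m κ) (hne : κ ≠ y) : ∃ z ∈ survivors m κ, ∃ c, 0 ≤ c ∧ c ≤ q ∧
      covalue m q y ≤ covalue m q κ + c * (covalue m q z - 1) := by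
  have hlt : toLex κ < toLex y := (hy.2 0).lt_of_ne hne
  obtain ⟨n, hagree, hn⟩ := toLex_lt_toLex.1 hlt
  refine ⟨_, shiftN_mem_survivors hy (n + 1), q ^ (blockStart κ n + (y n + 1)),
    pow_nonneg hq.1.le _, pow_le_of_le_one hq.1.le hq.2.le (by omega), ?_⟩
  have hle := le_covalue_sub hq hagree hn (hy.1.1 n)
  have : 0 ≤ q ^ blockStart κ n * (q ^ (κ n + 1) * covalue m q (shiftN (n + 1) κ)) :=
    mul_nonneg (pow_nonneg hq.1.le _)
      (mul_nonneg (pow_nonneg hq.1.le _) (covalue_nonneg hq.1.le _))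
  rw [pow_add]
  linarith

/-- An excess of the covalue over `1` is carried on, enlarged by a factor `1 / q`, to a shift. As
covalues are bounded, there is no excess. -/
theorem covalue_le_one_of_mem_survivors (hq : q ∈ Ioo (0 : ℝ) 1) {κ x : ℕ → ℕ}
    (hκ : covalue m q κ ≤ 1) (hx : x ∈ survivors m κ) : covalue m q x ≤ 1 := by
  let excess (y : survivors m κ) : ℝ := max (covalue m q y - 1) 0
  have hbdd : BddAbove (range excess) := ⟨m / (1 - q), by
    rintro _ ⟨y, rfl⟩
    have hy := covalue_le (m := m) hq y
    exact max_le (by linarith) ((covalue_nonneg hq.1.le _).trans hy)⟩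
  have hgrow : ∀ y, ∃ z, excess y ≤ q * excess z := fun y => by
    rcases eq_or_ne κ y with h | h
    · exact ⟨y, by simp [excess, ← h, hκ]⟩
    obtain ⟨z, hz, c, hc₀, hcq, hle⟩ := exists_mem_survivors_covalue_le hq y.2 h
    refine ⟨⟨z, hz⟩, max_le ?_ (mul_nonneg hq.1.le (le_max_right _ _))⟩
    calc covalue m q y - 1 ≤ c * (covalue m q z - 1) := by linarith
      _ ≤ c * excess ⟨z, hz⟩ := mul_le_mul_of_nonneg_left (le_max_left _ _) hc₀
      _ ≤ q * excess ⟨z, hz⟩ := mul_le_mul_of_nonneg_right hcq (le_max_right _ _)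
  have := nonpos_of_forall_exists_le_mul hbdd hq.1.le hq.2 hgrow ⟨x, hx⟩
  exact sub_nonpos.1 ((le_max_left _ _).trans this)

theorem covalue_le_of_mem_survivors (hq : q ∈ Ioo (0 : ℝ) 1) {κ x : ℕ → ℕ}
    (hκ : covalue m q κ ≤ 1) (hx : x ∈ survivors m κ) : covalue m q x ≤ covalue m q κ := by
  rcases eq_or_ne κ x with rfl | hne
  · rfl
  obtain ⟨z, hz, c, hc₀, -, hle⟩ := exists_mem_survivors_covalue_le hq hx hne
  linarith [mul_nonneg hc₀ (sub_nonneg.2 (covalue_le_one_of_mem_survivors hq hκ hz))]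

end Covalue

section Expansions

variable {m : ℕ} {q : ℝ}

theorem exists_tailWeight_add_mul_eq (hq : 0 < q) (hw : 1 ≤ tailWeight m q 0 + q) {v : ℝ}
    (hv : v ∈ Ioc (0 : ℝ) 1) :
    ∃ k ≤ m, ∃ v' ∈ Ioc (0 : ℝ) 1, v = tailWeight m q k + q ^ (k + 1) * v' := by
  classical
  have hex : ∃ k, tailWeight m q k < v := ⟨m, by simpa using hv.1⟩
  obtain ⟨k, hk, hmin⟩ : ∃ k, tailWeight m q k < v ∧ ∀ j < k, v ≤ tailWeight m q j :=
    ⟨Nat.find hex, Nat.find_spec hex, fun j hj => not_lt.1 (Nat.find_min hex hj)⟩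
  have hkm : k ≤ m := not_lt.1 fun h => (hmin m h).not_gt (by simpa using hv.1)
  have hpow : 0 < q ^ (k + 1) := pow_pos hq _
  refine ⟨k, hkm, (v - tailWeight m q k) / q ^ (k + 1),
    ⟨div_pos (sub_pos.2 hk) hpow, (div_le_one hpow).2 ?_⟩, by field_simp; ring⟩
  cases k with
  | zero => simpa using by linarith [hv.2]
  | succ k => linarith [hmin k k.lt_succ_self, tailWeight_eq_add (q := q) hkm]

theorem covalue_itinerary {ι : Type*} (hq : q ∈ Ioo (0 : ℝ) 1) {d : ι → ℕ} {R : ι → ι} {v : ι → ℝ}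
    (hv : ∀ a, v a ∈ Ioc (0 : ℝ) 1)
    (hstep : ∀ a, v a = tailWeight m q (d a) + q ^ (d a + 1) * v (R a)) (a : ι) :
    covalue m q (fun j => d (R^[j] a)) = v a := by
  let x (a : ι) : ℕ → ℕ := fun j => d (R^[j] a)
  have hbdd : BddAbove (range fun a => |covalue m q (x a) - v a|) := by
    refine ⟨max (m / (1 - q)) 1, ?_⟩
    rintro _ ⟨a, rfl⟩
    exact abs_sub_le_of_nonneg_of_le (covalue_nonneg hq.1.le _)
      ((covalue_le hq _).trans (le_max_left _ _)) (hv a).1.le ((hv a).2.trans (le_max_right _ _))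
  have hcontract : ∀ a, ∃ b, |covalue m q (x a) - v a| ≤ q * |covalue m q (x b) - v b| := by
    refine fun a => ⟨R a, ?_⟩
    have hrec : covalue m q (x a) - v a = q ^ (d a + 1) * (covalue m q (x (R a)) - v (R a)) := by
      rw [hstep a, covalue_eq hq, show shiftN 1 (x a) = x (R a) from rfl, show x a 0 = d a from rfl]
      ring
    rw [hrec, abs_mul, abs_of_nonneg (pow_nonneg hq.1.le _)]
    exact mul_le_mul_of_nonneg_right (pow_le_of_le_one hq.1.le hq.2.le (by omega)) (abs_nonneg _)
  have := nonpos_of_forall_exists_le_mul hbdd hq.1.le hq.2 hcontract a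
  exact sub_eq_zero.1 (abs_nonpos_iff.1 this)

theorem mem_codes_of_covalue_pos {x : ℕ → ℕ} (hx : ∀ i, x i ≤ m)
    (hpos : ∀ n, 0 < covalue m q (shiftN n x)) : x ∈ codes m := by
  refine ⟨hx, fun h => ?_⟩
  obtain ⟨n, hn⟩ := eventually_atTop.1 h
  refine (hpos n).ne' ((tsum_congr fun j => ?_).trans tsum_zero)
  have : shiftN n x j = m := (hx _).antisymm (not_lt.1 (hn (j + n) (by omega)))
  rw [this, tailWeight_self, mul_zero]

theorem exists_mem_codes_covalue_eq (hq : q ∈ Ioo (0 : ℝ) 1) (hw : 1 ≤ tailWeight m q 0 + q) {v : ℝ}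
    (hv : v ∈ Ioc (0 : ℝ) 1) : ∃ x ∈ codes m, covalue m q x = v ∧
      ∀ n, covalue m q (shiftN n x) ≤ 1 := by
  have hstep : ∀ v : Ioc (0 : ℝ) 1, ∃ k, ∃ v' : Ioc (0 : ℝ) 1,
      k ≤ m ∧ (v : ℝ) = tailWeight m q k + q ^ (k + 1) * v' := fun v => by
    obtain ⟨k, hk, v', hv', h⟩ := exists_tailWeight_add_mul_eq hq.1 hw v.2
    exact ⟨k, ⟨v', hv'⟩, hk, h⟩
  choose d R hd hR using hstep
  let x : ℕ → ℕ := fun j => d (R^[j] ⟨v, hv⟩)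
  have hshift : ∀ n, covalue m q (shiftN n x) = R^[n] ⟨v, hv⟩ := fun n => by
    rw [← covalue_itinerary hq Subtype.prop hR]
    congr 1
    funext j
    simp only [x, shiftN, Function.iterate_add_apply]
  exact ⟨x, mem_codes_of_covalue_pos (fun i => hd _) fun n => hshift n ▸ (R^[n] ⟨v, hv⟩).2.1,
    hshift 0, fun n => hshift n ▸ (R^[n] ⟨v, hv⟩).2.2⟩

theorem covalue_image_survivors (hq : q ∈ Ioo (0 : ℝ) 1) (hw : 1 ≤ tailWeight m q 0 + q)
    {κ : ℕ → ℕ} (hκ : κ ∈ minimalCodes m) (h : covalue m q κ = 1) :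
    covalue m q '' survivors m κ = Ioc 0 1 := by
  refine Subset.antisymm ?_ fun v hv => ?_
  · rintro _ ⟨x, hx, rfl⟩
    exact ⟨covalue_pos hq hx.1, covalue_le_one_of_mem_survivors hq h.le hx⟩
  obtain ⟨x, hx, hxv, hle⟩ := exists_mem_codes_covalue_eq hq hw hv
  refine ⟨x, ⟨hx, fun n => not_lt.1 fun hlt => (hle n).not_gt ?_⟩, hxv⟩
  rw [← h]
  exact covalue_lt_of_toLex_lt hq (shiftN_mem_codes hx n) hκ.1.1
    (fun i => covalue_le_one_of_mem_survivors hq h.le (shiftN_mem_survivors hκ i)) hlt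

end Expansions

section Dimension

variable {m : ℕ} {p q : ℝ}

theorem le_abs_covalue_sub_of_mem_survivors (hp : p ∈ Ioo (0 : ℝ) 1) {κ x y : ℕ → ℕ} {n : ℕ}
    (hκ : covalue m p κ ≤ 1) (hy : y ∈ survivors m κ) (h : ∀ i < n, x i = y i) (hn : x n < y n) :
    p ^ (m + 1) * (1 - covalue m p κ) * p ^ blockStart x n ≤ |covalue m p x - covalue m p y| := by
  refine le_trans ?_ ((le_covalue_sub hp h hn (hy.1.1 n)).trans (le_abs_self _))
  rw [mul_comm]
  refine mul_le_mul_of_nonneg_left ?_ (pow_nonneg hp.1.le _)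
  have htail := covalue_le_of_mem_survivors hp hκ (shiftN_mem_survivors hy (n + 1))
  have hpow : p ^ (m + 1) ≤ p ^ (y n + 1) :=
    pow_le_pow_of_le_one hp.1.le hp.2.le (Nat.succ_le_succ (hy.1.1 n))
  have hx : 0 ≤ p ^ (x n + 1) * covalue m p (shiftN (n + 1) x) :=
    mul_nonneg (pow_nonneg hp.1.le _) (covalue_nonneg hp.1.le _)
  have : p ^ (m + 1) * (1 - covalue m p κ) ≤
      p ^ (y n + 1) * (1 - covalue m p (shiftN (n + 1) y)) :=
    mul_le_mul hpow (by linarith) (by linarith) (pow_nonneg hp.1.le _)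
  linarith

theorem abs_covalue_sub_le_rpow (hp : p ∈ Ioo (0 : ℝ) 1) (hq : q ∈ Ioo (0 : ℝ) 1)
    {κ x y : ℕ → ℕ} (hκ : covalue m p κ < 1) (hy : y ∈ survivors m κ)
    (hlt : toLex x < toLex y) :
    |covalue m q x - covalue m q y| ≤
      m / (1 - q) * (p ^ (m + 1) * (1 - covalue m p κ))⁻¹ ^ Real.logb p q *
        |covalue m p x - covalue m p y| ^ Real.logb p q := by
  obtain ⟨n, hagree, hn⟩ := toLex_lt_toLex.1 hlt
  have hc : 0 < p ^ (m + 1) * (1 - covalue m p κ) :=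
    mul_pos (pow_pos hp.1 _) (sub_pos.2 hκ)
  have hsep : p ^ blockStart x n ≤
      (p ^ (m + 1) * (1 - covalue m p κ))⁻¹ * |covalue m p x - covalue m p y| := by
    rw [inv_mul_eq_div, le_div_iff₀' hc]
    exact le_abs_covalue_sub_of_mem_survivors hp hκ.le hy hagree hn
  have hpow : q ^ blockStart x n = (p ^ blockStart x n) ^ Real.logb p q := by
    rw [← Real.rpow_pow_comm hp.1.le, Real.rpow_logb hp.1 hp.2.ne hq.1]
  have hr : 0 ≤ Real.logb p q :=
    (Real.logb_pos_of_base_lt_one hp.1 hp.2 hq.1 hq.2).le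
  rw [mul_assoc, ← Real.mul_rpow (inv_nonneg.2 hc.le) (abs_nonneg _)]
  refine (abs_covalue_sub_le hq hagree).trans (mul_le_mul_of_nonneg_left ?_
    (div_nonneg m.cast_nonneg (sub_nonneg.2 hq.2.le)))
  rw [hpow]
  exact Real.rpow_le_rpow (pow_nonneg hp.1.le _) hsep hr

theorem dimH_covalue_image_le_div (hp : p ∈ Ioo (0 : ℝ) 1) (hq : q ∈ Ioo (0 : ℝ) 1)
    {κ : ℕ → ℕ} (hκ : covalue m p κ < 1) :
    dimH (covalue m q '' survivors m κ) ≤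
      dimH (covalue m p '' survivors m κ) / ENNReal.ofReal (Real.logb p q) := by
  have hr := Real.logb_pos_of_base_lt_one hp.1 hp.2 hq.1 hq.2
  refine dimH_image_le_of_dist_le_mul_rpow
    (C := m / (1 - q) * (p ^ (m + 1) * (1 - covalue m p κ))⁻¹ ^ Real.logb p q) hr
    fun x hx y hy => ?_
  rcases lt_trichotomy (toLex x) (toLex y) with h | h | h
  · exact abs_covalue_sub_le_rpow hp hq hκ hy h
  · obtain rfl : x = y := h
    simp [Real.zero_rpow hr.ne']
  · rw [dist_comm, dist_comm (covalue m p x)]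
    exact abs_covalue_sub_le_rpow hp hq hκ hx h

theorem dimH_covalue_image_le (hp : p ∈ Ioo (0 : ℝ) 1) (hq : q ∈ Ioo (0 : ℝ) 1)
    {κ : ℕ → ℕ} (hκ : covalue m p κ < 1) :
    dimH (covalue m q '' survivors m κ) ≤ ENNReal.ofReal (Real.logb q p) := by
  refine (dimH_covalue_image_le_div hp hq hκ).trans ?_
  rw [← Real.inv_logb p q, ENNReal.ofReal_inv_of_pos
    (Real.logb_pos_of_base_lt_one hp.1 hp.2 hq.1 hq.2), ENNReal.div_eq_inv_mul]
  exact mul_le_of_le_one_right' ((dimH_mono (subset_univ _)).trans Real.dimH_univ.le)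

theorem strictMonoOn_covalue {κ : ℕ → ℕ} (hκ : κ ∈ codes m) :
    StrictMonoOn (fun q => covalue m q κ) (Ioo 0 1) := by
  intro p hp q hq hpq
  obtain ⟨n, hn⟩ := hκ.2.exists
  have hpow : ∀ k, p ^ k ≤ q ^ k := fun k => pow_le_pow_left₀ hp.1.le hpq.le k
  refine (summable_covalue hp κ).tsum_lt_tsum (i := n) (fun j => ?_) ?_ (summable_covalue hq κ)
  · exact mul_le_mul (hpow _) (Finset.sum_le_sum fun _ _ => hpow _) (tailWeight_nonneg hp.1.le _)
      (pow_nonneg hq.1.le _)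
  · refine mul_lt_mul' (hpow _) ?_ (tailWeight_nonneg hp.1.le _) (pow_pos hq.1 _)
    exact Finset.sum_lt_sum_of_nonempty (by simpa using hn) fun j hj =>
      pow_lt_pow_left₀ hpq hp.1.le (by have := (Finset.mem_Ico.1 hj).1; omega)

theorem continuousOn_covalue (hq : q ∈ Ioo (0 : ℝ) 1) (κ : ℕ → ℕ) :
    ContinuousOn (fun r => covalue m r κ) (Icc 0 q) := by
  refine continuousOn_tsum (fun i => ?_) (summable_mul_geometric (m : ℝ) hq) fun j r hr => ?_
  · unfold tailWeight
    fun_prop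
  rw [Real.norm_of_nonneg (covalue_term_nonneg hr.1 κ j)]
  exact (covalue_term_le hr.1 (hr.2.trans hq.2.le) κ j).trans
    (mul_le_mul_of_nonneg_left (pow_le_pow_left₀ hr.1 hr.2 j) m.cast_nonneg)

/-- In the limit `q → 1` each entry `k < m` of a code contributes `m - k ≥ 1` to the covalue, and
there are at least two of them. -/
theorem exists_one_lt_covalue {κ : ℕ → ℕ} (hκ : κ ∈ codes m) (hq : q < 1) :
    ∃ r ∈ Ioo q 1, 0 < r ∧ 1 < covalue m r κ := by
  obtain ⟨n₁, h₁⟩ := hκ.2.exists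
  obtain ⟨n₂, hn, h₂⟩ := (frequently_atTop'.1 hκ.2) n₁
  let partialSum (r : ℝ) := ∑ j ∈ {n₁, n₂}, r ^ blockStart κ j * tailWeight m r (κ j)
  have hcont : Continuous partialSum := by
    unfold partialSum tailWeight
    fun_prop
  have hone : 1 < partialSum 1 := by
    have h : ∀ n, κ n < m → (1 : ℝ) ≤ tailWeight m 1 (κ n) := fun n hn => by
      simp [tailWeight]
      omega
    simp only [partialSum, Finset.sum_pair hn.ne, one_pow, one_mul]
    linarith [h n₁ h₁, h n₂ h₂]
  have hnear : ∀ᶠ r in nhdsWithin 1 (Iio 1), 1 < partialSum r :=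
    (hcont.continuousAt.eventually_const_lt hone).filter_mono nhdsWithin_le_nhds
  obtain ⟨r, hr, hqr, hr₁⟩ := (hnear.and (Ioo_mem_nhdsLT (max_lt hq one_pos))).exists
  have hr₀ : 0 < r := (le_max_right _ _).trans_lt hqr
  exact ⟨r, ⟨(le_max_left _ _).trans_lt hqr, hr₁⟩, hr₀, hr.trans_le
    ((summable_covalue ⟨hr₀, hr₁⟩ κ).sum_le_tsum _ fun _ _ => covalue_term_nonneg hr₀.le _ _)⟩

theorem exists_covalue_eq_one (hq : 0 < q) (hq₁ : q < 1) {κ : ℕ → ℕ} (hκ : κ ∈ codes m)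
    (h : covalue m q κ ≤ 1) : ∃ ρ ∈ Ico q 1, covalue m ρ κ = 1 := by
  obtain ⟨r, hr, hr₀, hκr⟩ := exists_one_lt_covalue hκ hq₁
  obtain ⟨ρ, hρ, hρκ⟩ := intermediate_value_Icc hr.1.le
    ((continuousOn_covalue ⟨hr₀, hr.2⟩ κ).mono (Icc_subset_Icc_left hq.le)) ⟨h, hκr.le⟩
  exact ⟨ρ, ⟨hρ.1, hρ.2.trans_lt hr.2⟩, hρκ⟩

theorem tailWeight_mono (k : ℕ) : MonotoneOn (fun q => tailWeight m q k) (Ici 0) :=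
  fun _ hp _ _ hpq => Finset.sum_le_sum fun _ _ => pow_le_pow_left₀ hp hpq _

theorem le_dimH_covalue_image (hq : 0 < q) (hw : 1 ≤ tailWeight m q 0 + q) {κ : ℕ → ℕ}
    (hκ : κ ∈ minimalCodes m) {ρ : ℝ} (hρ : ρ ∈ Ico q 1) (h : covalue m ρ κ = 1) :
    ENNReal.ofReal (Real.logb q ρ) ≤ dimH (covalue m q '' survivors m κ) := by
  have hq' : q ∈ Ioo (0 : ℝ) 1 := ⟨hq, hρ.1.trans_lt hρ.2⟩
  have hρ' : ρ ∈ Ioo (0 : ℝ) 1 := ⟨hq.trans_le hρ.1, hρ.2⟩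
  have hwρ : 1 ≤ tailWeight m ρ 0 + ρ :=
    hw.trans (add_le_add (tailWeight_mono 0 hq.le hρ'.1.le hρ.1) hρ.1)
  have hdim : dimH (covalue m ρ '' survivors m κ) = 1 := by
    rw [covalue_image_survivors hρ' hwρ hκ h, Real.dimH_of_nonempty_interior (by simp)]
    simp
  rcases hρ.1.eq_or_lt with rfl | hlt
  · simp [hdim, Real.logb_self_eq_one_iff.2 ⟨hq.ne', hq'.2.ne, by linarith⟩]
  have hκq : covalue m q κ < 1 := (strictMonoOn_covalue hκ.1 hq' hρ' hlt).trans_eq h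
  have hscale := dimH_covalue_image_le_div hq' hρ' hκq
  have hr := Real.logb_pos_of_base_lt_one hq hq'.2 hρ'.1 hρ'.2
  rwa [hdim, ENNReal.le_div_iff_mul_le (by simp [hr]) (by simp), one_mul] at hscale

theorem dimH_covalue_image (hq : 0 < q) (hw : 1 ≤ tailWeight m q 0 + q) {κ : ℕ → ℕ}
    (hκ : κ ∈ minimalCodes m) {ρ : ℝ} (hρ : ρ ∈ Ico q 1) (h : covalue m ρ κ = 1) :
    dimH (covalue m q '' survivors m κ) = ENNReal.ofReal (Real.logb q ρ) := by
  refine le_antisymm ?_ (le_dimH_covalue_image hq hw hκ hρ h)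
  have hρ₀ : 0 < ρ := hq.trans_le hρ.1
  have hlim : Tendsto (fun p => ENNReal.ofReal (Real.logb q p)) (nhdsWithin ρ (Iio ρ))
      (nhds (ENNReal.ofReal (Real.logb q ρ))) :=
    (ENNReal.tendsto_ofReal (Real.continuousAt_logb hρ₀.ne').tendsto).mono_left nhdsWithin_le_nhds
  refine ge_of_tendsto hlim ?_
  filter_upwards [Ioo_mem_nhdsLT hρ₀] with p hp
  have hp' : p ∈ Ioo (0 : ℝ) 1 := ⟨hp.1, hp.2.trans hρ.2⟩
  exact dimH_covalue_image_le hp' ⟨hq, hρ.1.trans_lt hρ.2⟩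
    ((strictMonoOn_covalue hκ.1 hp' ⟨hρ₀, hρ.2⟩ hp.2).trans_eq h)

end Dimension

/-- The code `κ 0, …, κ (N - 1), κ N + 1, y 0, y 1, …`: it exceeds `κ`, but only from the `N`-th
entry on, and continues with `y`. -/
def bump (κ : ℕ → ℕ) (N : ℕ) (y : ℕ → ℕ) : ℕ → ℕ :=
  fun j => if j < N then κ j else if j = N then κ N + 1 else y (j - (N + 1))

section Bump

variable {m N : ℕ} {b κ y : ℕ → ℕ}

theorem bump_of_lt (κ y : ℕ → ℕ) {j : ℕ} (h : j < N) : bump κ N y j = κ j := if_pos h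

@[simp]
theorem bump_self (κ y : ℕ → ℕ) (N : ℕ) : bump κ N y N = κ N + 1 := by simp [bump]

theorem shiftN_bump (κ y : ℕ → ℕ) (N i : ℕ) : shiftN (i + (N + 1)) (bump κ N y) = shiftN i y := by
  funext j
  have : j + (i + (N + 1)) - (N + 1) = j + i := by omega
  simp only [shiftN, bump, this]
  rw [if_neg (by omega), if_neg (by omega)]

theorem toLex_lt_bump (κ y : ℕ → ℕ) (N : ℕ) : toLex κ < toLex (bump κ N y) :=
  ⟨N, fun _ hj => (bump_of_lt κ y hj).symm, by simp⟩

theorem bump_lt_of_le {n : ℕ} (h : ∀ i < n, κ i = b i) (hn : κ n < b n) (hN : n < N) :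
    toLex (bump κ N y) < toLex b :=
  ⟨n, fun i hi => (bump_of_lt κ y (hi.trans hN)).trans (h i hi), (bump_of_lt κ y hN).trans_lt hn⟩

theorem bump_mem_codes (hκ : ∀ i, κ i ≤ m) (hN : κ N < m) (hy : y ∈ codes m) :
    bump κ N y ∈ codes m := by
  refine ⟨fun i => ?_, ?_⟩
  · unfold bump
    split_ifs
    exacts [hκ i, hN, hy.1 _]
  · rw [← map_add_atTop_eq_nat (N + 1), frequently_map]
    refine hy.2.mono fun i hi => ?_
    have := congrFun (shiftN_bump κ y N 0) i
    simp only [shiftN, zero_add, add_zero] at this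
    rwa [this]

theorem bump_lt_shiftN_bump (hκ : κ ∈ minimalCodes m) {r : ℕ} (hr : 0 < r) (hrN : r ≤ N) :
    toLex (bump κ N y) < toLex (shiftN r (bump κ N y)) := by
  refine toLex_lt_of_agree_of_le (k := N - r) (y := shiftN r κ) (fun i hi => ?_) ?_ (hκ.2 r)
    fun i hi => bump_of_lt κ y (by omega)
  · exact (bump_of_lt κ y (by omega)).symm
  · simp [shiftN, Nat.sub_add_cancel hrN]

theorem bump_mem_minimalCodes (hκ : κ ∈ minimalCodes m) (hN : κ N < m) (hy : y ∈ survivors m b)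
    (hb : toLex (bump κ N y) ≤ toLex b) : bump κ N y ∈ minimalCodes m := by
  refine ⟨bump_mem_codes hκ.1.1 hN hy.1, fun r => ?_⟩
  rcases r.eq_zero_or_pos with rfl | hr
  · rfl
  rcases le_or_gt r N with hrN | hrN
  · exact (bump_lt_shiftN_bump hκ hr hrN).le
  · obtain ⟨i, rfl⟩ := Nat.exists_eq_add_of_le' (Nat.succ_le_of_lt hrN)
    exact shiftN_bump κ y N i ▸ hb.trans (hy.2 i)

theorem exists_mem_codes_lt (hb : b ∈ codes m) (n : ℕ) : ∃ N > n, b N < m :=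
  frequently_atTop'.1 hb.2 n

theorem survivors_nonempty (hb : b ∈ codes m) (h₀ : b 0 < m) : (survivors m b).Nonempty := by
  obtain ⟨K, hK, hbK⟩ := exists_mem_codes_lt hb 0
  let y (j : ℕ) : ℕ := if (K + 1) ∣ j then m - 1 else m
  refine ⟨y, ⟨fun i => ?_, ?_⟩, fun n => ?_⟩
  · unfold y
    split_ifs <;> omega
  · refine frequently_atTop.2 fun n => ⟨(K + 1) * n, by nlinarith, ?_⟩
    simp only [y, dvd_mul_right, if_true]
    omega
  by_cases hn : (K + 1) ∣ n
  · have hfull : ∀ i, 0 < i → i ≤ K → shiftN n y i = m := fun i hi hiK =>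
      if_neg fun h => by
        have := Nat.le_of_dvd hi ((Nat.dvd_add_left hn).1 h)
        omega
    refine (toLex_lt_of_forall_le (n := K) (fun i hi => ?_) ?_).le
    · rcases i.eq_zero_or_pos with rfl | hi₀
      · simp only [shiftN, y, zero_add, hn, if_true]
        omega
      · exact (hb.1 i).trans_eq (hfull i hi₀ hi.le).symm
    · rwa [hfull K hK le_rfl]
  · exact (toLex_lt_of_forall_le (n := 0) (by simp) (by simpa [shiftN, y, hn] using h₀)).le

theorem minimal_zero_lt (hκ : κ ∈ minimalCodes m) : κ 0 < m := by
  obtain ⟨n, hn⟩ := hκ.1.2.exists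
  refine lt_of_le_of_lt (not_lt.1 fun h => (hκ.2 n).not_gt ⟨0, by simp, ?_⟩) hn
  simpa [shiftN] using h

theorem exists_minimal_gt_agree (hκ : κ ∈ minimalCodes m) (n : ℕ) :
    ∃ e ∈ minimalCodes m, toLex κ < toLex e ∧ ∀ i < n, κ i = e i := by
  obtain ⟨M, hM, hκM⟩ := exists_mem_codes_lt hκ.1 n
  obtain ⟨N, hN, hκN⟩ := exists_mem_codes_lt hκ.1 M
  have hb₀ : bump κ M κ 0 < m := (bump_of_lt κ κ (by omega)).trans_lt (minimal_zero_lt hκ)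
  obtain ⟨y, hy⟩ := survivors_nonempty (bump_mem_codes hκ.1.1 hκM hκ.1) hb₀
  have hlt : toLex (bump κ N y) < toLex (bump κ M κ) :=
    bump_lt_of_le (fun i hi => (bump_of_lt κ κ hi).symm) (by simp) hN
  exact ⟨_, bump_mem_minimalCodes hκ hκN hy hlt.le, toLex_lt_bump κ y N,
    fun i hi => (bump_of_lt κ y (by omega)).symm⟩

theorem exists_survivors_eq_of_notMem (hb : b ∈ codes m) (hmin : b ∉ minimalCodes m) :
    ∃ b' ∈ codes m, toLex b < toLex b' ∧ survivors m b' = survivors m b := by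
  obtain ⟨r, hr⟩ : ∃ r, toLex (shiftN r b) < toLex b := by
    by_contra h
    exact hmin ⟨hb, fun r => not_lt.1 fun hr => h ⟨r, hr⟩⟩
  obtain ⟨n, hagree, hn⟩ := toLex_lt_toLex.1 hr
  obtain ⟨N, hN, hbN⟩ := exists_mem_codes_lt hb (n + r)
  refine ⟨bump b N b, bump_mem_codes hb.1 hbN hb, toLex_lt_bump b b N,
    (survivors_antitone (toLex_lt_bump b b N).le).antisymm fun x hx => ⟨hx.1, fun j => ?_⟩⟩
  refine not_lt.1 fun hlt => ?_
  have hprefix : ∀ i < N, shiftN j x i = b i :=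
    agree_of_toLex_le_of_toLex_le (hx.2 j) hlt.le fun i hi => (bump_of_lt b b hi).symm
  have hshift : ∀ i ≤ n, shiftN (r + j) x i = shiftN r b i := fun i hi => by
    rw [← shiftN_shiftN]
    exact hprefix (i + r) (by omega)
  exact (hx.2 (r + j)).not_gt ⟨n, fun i hi => (hshift i hi.le).trans (hagree i hi),
    (hshift n le_rfl).trans_lt hn⟩

end Bump

/-- The sequence `k, x 0, x 1, …`. -/
def cons (k : ℕ) (x : ℕ → ℕ) : ℕ → ℕ
  | 0 => k
  | j + 1 => x j

/-- The left shift of binary sequences, read on codes. -/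
def binaryShift (x : ℕ → ℕ) : ℕ → ℕ :=
  if x 0 = 0 then shiftN 1 x else cons (x 0 - 1) (shiftN 1 x)

section BinaryShift

variable {m k l : ℕ} {b x y : ℕ → ℕ}

@[simp]
theorem cons_zero (k : ℕ) (x : ℕ → ℕ) : cons k x 0 = k := rfl

@[simp]
theorem shiftN_one_cons (k : ℕ) (x : ℕ → ℕ) : shiftN 1 (cons k x) = x := rfl

theorem cons_head_shiftN_one (x : ℕ → ℕ) : cons (x 0) (shiftN 1 x) = x := by
  funext j
  cases j with
  | zero => rfl
  | succ j => rfl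

theorem cons_mem_codes (hk : k ≤ m) (hx : x ∈ codes m) : cons k x ∈ codes m := by
  refine ⟨fun i => ?_, ?_⟩
  · cases i with
    | zero => exact hk
    | succ i => exact hx.1 i
  · rw [← map_add_atTop_eq_nat 1]
    exact hx.2

theorem exists_eq_cons (hx : x ∈ codes m) : ∃ k ≤ m, ∃ y ∈ codes m, x = cons k y :=
  ⟨x 0, hx.1 0, shiftN 1 x, shiftN_mem_codes hx 1, (cons_head_shiftN_one x).symm⟩

theorem cons_lt_cons_of_lt (x y : ℕ → ℕ) (hkl : k < l) : toLex (cons k x) < toLex (cons l y) :=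
  ⟨0, by simp, hkl⟩

theorem cons_agree (k : ℕ) {n : ℕ} (h : ∀ i < n, x i = y i) :
    ∀ i < n + 1, cons k x i = cons k y i := fun i hi => by
  cases i with
  | zero => rfl
  | succ i => exact h i (by omega)

theorem cons_lt_cons_right (k : ℕ) (h : toLex x < toLex y) :
    toLex (cons k x) < toLex (cons k y) := by
  obtain ⟨n, hagree, hn⟩ := toLex_lt_toLex.1 h
  exact ⟨n + 1, cons_agree k hagree, hn⟩

theorem cons_le_cons_right : toLex (cons k x) ≤ toLex (cons k y) ↔ toLex x ≤ toLex y := by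
  refine ⟨fun h => not_lt.1 fun hlt => h.not_gt (cons_lt_cons_right k hlt), fun h => ?_⟩
  rcases h.eq_or_lt with heq | hlt
  · rw [toLex.injective heq]
  · exact (cons_lt_cons_right k hlt).le

theorem cons_le_cons (hkl : k ≤ l) (h : toLex x ≤ toLex y) :
    toLex (cons k x) ≤ toLex (cons l y) := by
  rcases hkl.eq_or_lt with rfl | hkl
  exacts [cons_le_cons_right.2 h, (cons_lt_cons_of_lt x y hkl).le]

@[simp]
theorem binaryShift_cons_zero (x : ℕ → ℕ) : binaryShift (cons 0 x) = x := if_pos rfl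

@[simp]
theorem binaryShift_cons_succ (k : ℕ) (x : ℕ → ℕ) : binaryShift (cons (k + 1) x) = cons k x :=
  if_neg k.succ_ne_zero

theorem binaryShift_mem_codes (hx : x ∈ codes m) : binaryShift x ∈ codes m := by
  obtain ⟨k, hk, y, hy, rfl⟩ := exists_eq_cons hx
  cases k with
  | zero => simpa using hy
  | succ k => simpa using cons_mem_codes (k.le_succ.trans hk) hy

theorem binaryShift_iterate_cons (k : ℕ) (x : ℕ → ℕ) : binaryShift^[k] (cons k x) = cons 0 x := by
  induction k with
  | zero => rfl
  | succ k ih => rw [Function.iterate_succ_apply, binaryShift_cons_succ, ih]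

theorem binaryShift_iterate_head (x : ℕ → ℕ) : binaryShift^[x 0] x = cons 0 (shiftN 1 x) := by
  conv_lhs => rw [← cons_head_shiftN_one x, cons_zero]
  exact binaryShift_iterate_cons (x 0) (shiftN 1 x)

theorem binaryShift_iterate_blockStart (x : ℕ → ℕ) (n : ℕ) :
    binaryShift^[blockStart x n] x = shiftN n x := by
  induction n with
  | zero => rfl
  | succ n ih =>
    rw [blockStart_succ, add_comm, Function.iterate_add_apply, ih, Function.iterate_succ_apply',
      show x n = shiftN n x 0 by simp [shiftN], binaryShift_iterate_head, binaryShift_cons_zero,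
      shiftN_shiftN, add_comm]

theorem shiftN_one_binaryShift_mem_survivors (hx : shiftN 1 x ∈ survivors m b) :
    shiftN 1 (binaryShift x) ∈ survivors m b := by
  unfold binaryShift
  split_ifs
  · exact shiftN_mem_survivors hx 1
  · exact hx

/-- It is enough to look at the times at which a block of ones is exhausted: whenever the orbit
starts with the digit `1`, it exceeds `cons 0 b`. -/
theorem forall_le_binaryShift_iterate_iff (hx : x ∈ codes m) :
    (∀ n, toLex (cons 0 b) ≤ toLex (binaryShift^[n] x)) ↔ shiftN 1 x ∈ survivors m b := by
  constructor
  · refine fun h => ⟨shiftN_mem_codes hx 1, fun i => ?_⟩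
    have hi := h (shiftN i x 0 + blockStart x i)
    rwa [Function.iterate_add_apply, binaryShift_iterate_blockStart, binaryShift_iterate_head,
      cons_le_cons_right, shiftN_shiftN, add_comm 1, ← shiftN_shiftN] at hi
  · intro h n
    have hn : shiftN 1 (binaryShift^[n] x) ∈ survivors m b := by
      induction n with
      | zero => exact h
      | succ n ih =>
        rw [Function.iterate_succ_apply']
        exact shiftN_one_binaryShift_mem_survivors ih
    rw [← cons_head_shiftN_one (binaryShift^[n] x)]
    exact cons_le_cons (Nat.zero_le _) (hn.2 0)

end BinaryShift

theorem Kset_antitone {β s t : ℝ} (hst : s ≤ t) : Kset β t ⊆ Kset β s :=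
  fun _ hx => ⟨hx.1, fun n => hst.trans (hx.2 n)⟩

theorem Bset_inter_Ioo_eq_empty {β t t' : ℝ} (ht' : t' < 1)
    (h : dimH (Kset β t') = dimH (Kset β t)) : Bset β ∩ Ioo t t' = ∅ := by
  refine eq_empty_of_forall_notMem fun s ⟨hs, hts, hst'⟩ => hs.2 t' hst' ht' ?_
  exact (dimH_mono (Kset_antitone hst'.le)).antisymm
    ((dimH_mono (Kset_antitone hts.le)).trans h.ge)

theorem dimH_Kset_eq_zero_of_tendsto {β t : ℝ} (ht : t ∈ Ico (0 : ℝ) 1) (htB : t ∉ Bset β)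
    (hlim : Tendsto (fun r => dimH (Bset β ∩ Ioo t (t + r))) (nhdsWithin 0 (Ioi 0))
      (nhds (dimH (Kset β t)))) : dimH (Kset β t) = 0 := by
  obtain ⟨t', htt', ht', heq⟩ : ∃ t', t < t' ∧ t' < 1 ∧ dimH (Kset β t') = dimH (Kset β t) := by
    by_contra! h
    exact htB ⟨ht, h⟩
  refine tendsto_nhds_unique hlim (tendsto_const_nhds.congr' ?_)
  filter_upwards [Ioo_mem_nhdsGT (sub_pos.2 htt')] with r hr
  have hempty : Bset β ∩ Ioo t (t + r) = ∅ := subset_empty_iff.1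
    ((inter_subset_inter_right _ (Ioo_subset_Ioo_right (by linarith [hr.2]))).trans
      (Bset_inter_Ioo_eq_empty ht' heq).subset)
  rw [hempty, dimH_empty]

/-- `q` is the reciprocal of the multinacci number of order `m`. -/
structure IsMultinacciRoot (m : ℕ) (q : ℝ) : Prop where
  mem_Ioo : q ∈ Ioo (0 : ℝ) 1
  sum_pow : ∑ i ∈ Finset.Ico 1 (m + 2), q ^ i = 1

theorem exists_isMultinacciRoot {β : ℝ} (hβ : 1 < β) (h : IsMultinacci β) :
    ∃ m q, IsMultinacciRoot m q ∧ q⁻¹ = β := by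
  obtain ⟨m, -, hm⟩ := h
  have hβ₀ : 0 < β := one_pos.trans hβ
  refine ⟨m, β⁻¹, ⟨⟨inv_pos.2 hβ₀, inv_lt_one_of_one_lt₀ hβ⟩, ?_⟩, inv_inv β⟩
  have hdiv : β ^ (m + 1) / β ^ (m + 1) = 1 := div_self (pow_pos hβ₀ _).ne'
  rw [Finset.sum_Ico_eq_sum_range, ← hdiv]
  nth_rewrite 1 [hm]
  rw [Finset.sum_div, ← Finset.sum_range_reflect]
  refine Finset.sum_congr rfl fun i hi => ?_
  have hi : i ≤ m := Nat.lt_succ_iff.1 (Finset.mem_range.1 hi)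
  rw [eq_div_iff (pow_pos hβ₀ _).ne', inv_pow, inv_mul_eq_div,
    div_eq_iff (pow_pos hβ₀ _).ne', ← pow_add]
  congr 1
  omega

/-- The number with expansion `1^{x 0} 0 1^{x 1} 0 ⋯` in the multinacci base `1 / q` of order
`m`. -/
noncomputable def value (m : ℕ) (q : ℝ) (x : ℕ → ℕ) : ℝ := 1 - covalue m q x

namespace IsMultinacciRoot

variable {m k : ℕ} {q : ℝ} {a b κ e x y : ℕ → ℕ} (hq : IsMultinacciRoot m q)
include hq

theorem mem_Ioo_of_mem_Ico {ρ : ℝ} (hρ : ρ ∈ Ico q 1) : ρ ∈ Ioo (0 : ℝ) 1 :=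
  ⟨hq.mem_Ioo.1.trans_le hρ.1, hρ.2⟩

theorem one_sub_tailWeight (hk : k ≤ m) :
    1 - tailWeight m q k = ∑ i ∈ Finset.Ico 1 (k + 2), q ^ i := by
  rw [← hq.sum_pow, tailWeight, ← Finset.sum_Ico_consecutive _ (by omega : 1 ≤ k + 2) (by omega),
    add_sub_cancel_right]

theorem one_le_tailWeight_add : 1 ≤ tailWeight m q 0 + q := by
  have := hq.one_sub_tailWeight m.zero_le
  simp only [zero_add, Nat.Ico_succ_singleton, Finset.sum_singleton, pow_one] at this
  linarith

theorem covalue_le_one (hx : x ∈ codes m) : covalue m q x ≤ 1 := by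
  have hzero : covalue m q 0 = 1 := by
    have hrec := covalue_eq (m := m) hq.mem_Ioo 0
    have hw := hq.one_sub_tailWeight m.zero_le
    have hshift : shiftN 1 0 = 0 := rfl
    simp only [Pi.zero_apply, zero_add, pow_one, hshift, Nat.Ico_succ_singleton,
      Finset.sum_singleton] at hrec hw
    nlinarith [hq.mem_Ioo.2]
  refine covalue_le_one_of_mem_survivors hq.mem_Ioo hzero.le ⟨hx, fun n => ?_⟩
  exact Pi.toLex_monotone fun i => Nat.zero_le _

theorem exists_root (hκ : κ ∈ codes m) : ∃ ρ ∈ Ico q 1, covalue m ρ κ = 1 :=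
  exists_covalue_eq_one hq.mem_Ioo.1 hq.mem_Ioo.2 hκ (hq.covalue_le_one hκ)

theorem dimH_survivors (hκ : κ ∈ minimalCodes m) {ρ : ℝ} (hρ : ρ ∈ Ico q 1)
    (hρκ : covalue m ρ κ = 1) :
    dimH (covalue m q '' survivors m κ) = ENNReal.ofReal (Real.logb q ρ) :=
  dimH_covalue_image hq.mem_Ioo.1 hq.one_le_tailWeight_add hκ hρ hρκ

theorem dimH_survivors_lt (hκ : κ ∈ minimalCodes m) (he : e ∈ minimalCodes m)
    (hlt : toLex κ < toLex e) :
    dimH (covalue m q '' survivors m e) < dimH (covalue m q '' survivors m κ) := by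
  obtain ⟨ρ, hρ, hρκ⟩ := hq.exists_root hκ.1
  obtain ⟨σ, hσ, hσe⟩ := hq.exists_root he.1
  have hρ' := hq.mem_Ioo_of_mem_Ico hρ
  have hσ' := hq.mem_Ioo_of_mem_Ico hσ
  have heρ : covalue m ρ e < covalue m σ e := by
    rw [hσe, ← hρκ]
    refine covalue_lt_of_toLex_lt hρ' hκ.1 he.1.1 (fun n => ?_) hlt
    exact covalue_le_one_of_mem_survivors hρ' hρκ.le
      (shiftN_mem_survivors (mem_survivors_of_minimal he hlt.le) n)
  have hρσ : ρ < σ := ((strictMonoOn_covalue he.1).lt_iff_lt hρ' hσ').1 heρ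
  rw [hq.dimH_survivors hκ hρ hρκ, hq.dimH_survivors he hσ hσe]
  refine (ENNReal.ofReal_lt_ofReal_iff ?_).2
    (Real.logb_lt_logb_of_base_lt_one hq.mem_Ioo.1 hq.mem_Ioo.2 hρ'.1 hρσ)
  exact Real.logb_pos_of_base_lt_one hq.mem_Ioo.1 hq.mem_Ioo.2 hρ'.1 hρ'.2

theorem dimH_survivors_pos (hκ : κ ∈ minimalCodes m) :
    0 < dimH (covalue m q '' survivors m κ) := by
  obtain ⟨e, he, hlt, -⟩ := exists_minimal_gt_agree hκ 0
  exact zero_le.trans_lt (hq.dimH_survivors_lt hκ he hlt)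

theorem exists_minimal_gt_root_lt (hκ : κ ∈ minimalCodes m) {ρ p : ℝ} (hρ : ρ ∈ Ico q 1)
    (hρκ : covalue m ρ κ = 1) (hp : p ∈ Ioo ρ 1) :
    ∃ e ∈ minimalCodes m, toLex κ < toLex e ∧ ∃ σ ∈ Ico q p, covalue m σ e = 1 := by
  have hρ' := hq.mem_Ioo_of_mem_Ico hρ
  have hp' : p ∈ Ioo (0 : ℝ) 1 := ⟨hρ'.1.trans hp.1, hp.2⟩
  have hκp : 1 < covalue m p κ := hρκ ▸ strictMonoOn_covalue hκ.1 hρ' hp' hp.1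
  obtain ⟨n, hn⟩ := exists_forall_agree_abs_covalue_sub_lt m hp' (sub_pos.2 hκp)
  obtain ⟨e, he, hlt, hagree⟩ := exists_minimal_gt_agree hκ n
  obtain ⟨σ, hσ, hσe⟩ := hq.exists_root he.1
  have hep : covalue m σ e < covalue m p e := by linarith [(abs_lt.1 (hn κ e hagree)).2]
  have hσp : σ < p :=
    ((strictMonoOn_covalue he.1).lt_iff_lt (hq.mem_Ioo_of_mem_Ico hσ) hp').1 hep
  exact ⟨e, he, hlt, σ, ⟨hσ.1, hσp⟩, hσe⟩

theorem dimH_survivors_le_of_forall_gt (hκ : κ ∈ minimalCodes m) {D : ENNReal}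
    (hD : ∀ e ∈ minimalCodes m, toLex κ < toLex e → dimH (covalue m q '' survivors m e) ≤ D) :
    dimH (covalue m q '' survivors m κ) ≤ D := by
  obtain ⟨ρ, hρ, hρκ⟩ := hq.exists_root hκ.1
  have hρ₀ := (hq.mem_Ioo_of_mem_Ico hρ).1
  rw [hq.dimH_survivors hκ hρ hρκ]
  have hlim : Tendsto (fun p => ENNReal.ofReal (Real.logb q p)) (nhdsWithin ρ (Ioi ρ))
      (nhds (ENNReal.ofReal (Real.logb q ρ))) :=
    (ENNReal.tendsto_ofReal (Real.continuousAt_logb hρ₀.ne').tendsto).mono_left nhdsWithin_le_nhds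
  refine le_of_tendsto hlim ?_
  filter_upwards [Ioo_mem_nhdsGT hρ.2] with p hp
  obtain ⟨e, he, hlt, σ, hσ, hσe⟩ := hq.exists_minimal_gt_root_lt hκ hρ hρκ hp
  have hσ' : σ ∈ Ico q 1 := ⟨hσ.1, hσ.2.trans hp.2⟩
  refine le_trans (ENNReal.ofReal_le_ofReal ?_)
    ((hq.dimH_survivors he hσ' hσe).ge.trans (hD e he hlt))
  exact (Real.logb_lt_logb_of_base_lt_one hq.mem_Ioo.1 hq.mem_Ioo.2
    (hq.mem_Ioo_of_mem_Ico hσ').1 hσ.2).le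

theorem value_cons (hk : k ≤ m) (x : ℕ → ℕ) :
    value m q (cons k x) =
      ∑ i ∈ Finset.Ico 1 (k + 2), q ^ i - q ^ (k + 1) * covalue m q x := by
  rw [value, covalue_eq hq.mem_Ioo, ← hq.one_sub_tailWeight hk, cons_zero, shiftN_one_cons]
  ring

theorem value_cons_zero (x : ℕ → ℕ) : value m q (cons 0 x) = q * value m q x := by
  rw [hq.value_cons m.zero_le, value]
  simp [mul_sub]

theorem value_cons_succ (hk : k + 1 ≤ m) (x : ℕ → ℕ) :
    value m q (cons (k + 1) x) = q * (1 + value m q (cons k x)) := by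
  have hsum : ∑ i ∈ Finset.Ico 1 (k + 3), q ^ i = q + q * ∑ i ∈ Finset.Ico 1 (k + 2), q ^ i := by
    rw [Finset.sum_eq_sum_Ico_succ_bot (by omega), pow_one, Finset.mul_sum]
    simp only [Finset.sum_Ico_eq_sum_range, pow_add, pow_one, mul_assoc]
    rfl
  rw [hq.value_cons hk, hq.value_cons (k.le_succ.trans hk), hsum]
  ring

theorem value_mem_Ico (hx : x ∈ codes m) : value m q x ∈ Ico (0 : ℝ) 1 :=
  ⟨sub_nonneg.2 (hq.covalue_le_one hx), sub_lt_self 1 (covalue_pos hq.mem_Ioo hx)⟩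

theorem value_lt_value (hx : x ∈ codes m) (hy : y ∈ codes m) (hlt : toLex x < toLex y) :
    value m q x < value m q y :=
  sub_lt_sub_left (covalue_lt_of_toLex_lt hq.mem_Ioo hx hy.1
    (fun n => hq.covalue_le_one (shiftN_mem_codes hy n)) hlt) 1

theorem value_le_value (hx : x ∈ codes m) (hy : y ∈ codes m) :
    value m q x ≤ value m q y ↔ toLex x ≤ toLex y := by
  refine ⟨fun h => not_lt.1 fun hlt => h.not_gt (hq.value_lt_value hy hx hlt), fun h => ?_⟩
  rcases h.eq_or_lt with heq | hlt
  · rw [toLex.injective heq]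
  · exact (hq.value_lt_value hx hy hlt).le

theorem exists_value_eq {t : ℝ} (ht : t ∈ Ico (0 : ℝ) 1) : ∃ x ∈ codes m, value m q x = t := by
  obtain ⟨x, hx, hxt, -⟩ := exists_mem_codes_covalue_eq hq.mem_Ioo hq.one_le_tailWeight_add
    (v := 1 - t) ⟨sub_pos.2 ht.2, sub_le_self 1 ht.1⟩
  exact ⟨x, hx, by rw [value, hxt, sub_sub_cancel]⟩

theorem Tbeta_value (hx : x ∈ codes m) :
    Tbeta q⁻¹ (value m q x) = value m q (binaryShift x) := by
  have hmem := hq.value_mem_Ico (binaryShift_mem_codes hx)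
  obtain ⟨k, hk, y, -, rfl⟩ := exists_eq_cons hx
  cases k with
  | zero =>
    rw [Tbeta, hq.value_cons_zero, inv_mul_cancel_left₀ hq.mem_Ioo.1.ne']
    simpa using Int.fract_eq_self.2 hmem
  | succ k =>
    rw [Tbeta, hq.value_cons_succ hk, inv_mul_cancel_left₀ hq.mem_Ioo.1.ne', Int.fract_one_add]
    simpa using Int.fract_eq_self.2 hmem

theorem Tbeta_iterate_value (hx : x ∈ codes m) (n : ℕ) : binaryShift^[n] x ∈ codes m ∧
    (Tbeta q⁻¹)^[n] (value m q x) = value m q (binaryShift^[n] x) := by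
  induction n with
  | zero => exact ⟨hx, rfl⟩
  | succ n ih =>
    rw [Function.iterate_succ_apply', Function.iterate_succ_apply', ih.2]
    exact ⟨binaryShift_mem_codes ih.1, hq.Tbeta_value ih.1⟩

theorem value_mem_Kset_iff (ha : a ∈ codes m) (hx : x ∈ codes m) :
    value m q x ∈ Kset q⁻¹ (value m q a) ↔ ∀ n, toLex a ≤ toLex (binaryShift^[n] x) := by
  refine (and_iff_right (hq.value_mem_Ico hx)).trans (forall_congr' fun n => ?_)
  obtain ⟨hn, heq⟩ := hq.Tbeta_iterate_value hx n
  rw [heq, hq.value_le_value ha hn]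

theorem value_mem_Kset_value_cons_zero_iff (hb : b ∈ codes m) (hx : x ∈ codes m) :
    value m q x ∈ Kset q⁻¹ (value m q (cons 0 b)) ↔ shiftN 1 x ∈ survivors m b :=
  (hq.value_mem_Kset_iff (cons_mem_codes m.zero_le hb) hx).trans
    (forall_le_binaryShift_iterate_iff hx)

theorem Kset_value_eq_empty (ha : a ∈ codes m) (h₀ : a 0 ≠ 0) : Kset q⁻¹ (value m q a) = ∅ := by
  refine eq_empty_of_forall_notMem fun v hv => ?_
  obtain ⟨x, hx, rfl⟩ := hq.exists_value_eq hv.1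
  have hle := (hq.value_mem_Kset_iff ha hx).1 hv (x 0)
  rw [binaryShift_iterate_head, ← cons_head_shiftN_one a] at hle
  exact hle.not_gt (cons_lt_cons_of_lt _ _ (Nat.pos_of_ne_zero h₀))

theorem Kset_value_cons_zero (hb : b ∈ codes m) : Kset q⁻¹ (value m q (cons 0 b)) =
    ⋃ k : Fin (m + 1), (fun v => ∑ i ∈ Finset.Ico 1 (k + 2 : ℕ), q ^ i + -q ^ (k + 1 : ℕ) * v) ''
      (covalue m q '' survivors m b) := by
  ext v
  simp only [mem_iUnion, image_image, mem_image]
  constructor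
  · intro hv
    obtain ⟨x, hx, rfl⟩ := hq.exists_value_eq hv.1
    have hsurv := (hq.value_mem_Kset_value_cons_zero_iff hb hx).1 hv
    obtain ⟨k, hk, y, -, rfl⟩ := exists_eq_cons hx
    exact ⟨⟨k, Nat.lt_succ_of_le hk⟩, y, hsurv, by rw [hq.value_cons hk]; ring⟩
  · rintro ⟨k, y, hy, rfl⟩
    have hk : (k : ℕ) ≤ m := Nat.le_of_lt_succ k.2
    rw [neg_mul, ← sub_eq_add_neg, ← hq.value_cons hk]
    exact (hq.value_mem_Kset_value_cons_zero_iff hb (cons_mem_codes hk hy.1)).2 hy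

theorem dimH_Kset_value_cons_zero (hb : b ∈ codes m) :
    dimH (Kset q⁻¹ (value m q (cons 0 b))) = dimH (covalue m q '' survivors m b) := by
  have hpow (k : ℕ) : -q ^ (k + 1) ≠ 0 := neg_ne_zero.2 (pow_pos hq.mem_Ioo.1 _).ne'
  rw [hq.Kset_value_cons_zero hb, dimH_iUnion]
  simp only [dimH_image_const_add_mul _ (hpow _), iSup_const]

theorem value_cons_zero_mem_Bset (hκ : κ ∈ minimalCodes m) :
    value m q (cons 0 κ) ∈ Bset q⁻¹ := by
  have hκ₀ := cons_mem_codes m.zero_le hκ.1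
  refine ⟨hq.value_mem_Ico hκ₀, fun t ht ht₁ => ne_of_lt ?_⟩
  obtain ⟨a, ha, rfl⟩ := hq.exists_value_eq ⟨(hq.value_mem_Ico hκ₀).1.trans ht.le, ht₁⟩
  have hκa : toLex (cons 0 κ) < toLex a :=
    lt_of_not_ge fun h => ht.not_ge ((hq.value_le_value ha hκ₀).2 h)
  obtain ⟨n, hn, hna⟩ := toLex_lt_toLex.1 hκa
  obtain ⟨e, he, hlt, hagree⟩ := exists_minimal_gt_agree hκ n
  have he₀ := cons_mem_codes m.zero_le he.1
  have hcons := cons_agree 0 hagree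
  have hea : toLex (cons 0 e) < toLex a :=
    ⟨n, fun i hi => (hcons i (hi.trans n.lt_succ_self)).symm.trans (hn i hi),
      (hcons n n.lt_succ_self).symm.trans_lt hna⟩
  calc dimH (Kset q⁻¹ (value m q a))
      ≤ dimH (Kset q⁻¹ (value m q (cons 0 e))) :=
        dimH_mono (Kset_antitone (hq.value_lt_value he₀ ha hea).le)
    _ = dimH (covalue m q '' survivors m e) := hq.dimH_Kset_value_cons_zero he.1
    _ < dimH (covalue m q '' survivors m κ) := hq.dimH_survivors_lt hκ he hlt
    _ = dimH (Kset q⁻¹ (value m q (cons 0 κ))) := (hq.dimH_Kset_value_cons_zero hκ.1).symm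

theorem Bset_inv : Bset q⁻¹ = (fun κ => value m q (cons 0 κ)) '' minimalCodes m := by
  refine Subset.antisymm (fun t ht => ?_) (image_subset_iff.2 fun κ => hq.value_cons_zero_mem_Bset)
  obtain ⟨a, ha, rfl⟩ := hq.exists_value_eq ht.1
  obtain ⟨k, hk, b, hb, rfl⟩ := exists_eq_cons ha
  have hk₀ : k = 0 := by
    by_contra hk₀
    obtain ⟨t', htt', ht'⟩ := exists_between ht.1.2
    have hempty := hq.Kset_value_eq_empty ha hk₀
    refine ht.2 t' htt' ht' ?_
    rw [subset_empty_iff.1 ((Kset_antitone htt'.le).trans hempty.subset), hempty]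
  subst hk₀
  refine ⟨b, by_contra fun hmin => ?_, rfl⟩
  obtain ⟨b', hb', hlt, hsurv⟩ := exists_survivors_eq_of_notMem hb hmin
  have hb'₀ := cons_mem_codes m.zero_le hb'
  refine ht.2 _ (hq.value_lt_value ha hb'₀ (cons_lt_cons_right 0 hlt)) (hq.value_mem_Ico hb'₀).2 ?_
  rw [hq.dimH_Kset_value_cons_zero hb', hq.dimH_Kset_value_cons_zero hb, hsurv]

theorem Bset_inter_Ioi_subset_Kset (t : ℝ) : Bset q⁻¹ ∩ Ioi t ⊆ Kset q⁻¹ t := by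
  rintro s ⟨hs, hts⟩
  rw [hq.Bset_inv] at hs
  obtain ⟨e, he, rfl⟩ := hs
  exact Kset_antitone hts.le ((hq.value_mem_Kset_value_cons_zero_iff he.1
    (cons_mem_codes m.zero_le he.1)).2 he)

theorem value_bump (N : ℕ) (κ y : ℕ → ℕ) : value m q (cons 0 (bump κ N y)) =
    q * (value m q (bump κ N κ) + q ^ blockStart (bump κ N κ) (N + 1) * covalue m q κ) +
      -(q * q ^ blockStart (bump κ N κ) (N + 1)) * covalue m q y := by
  have hagree : ∀ i < N + 1, bump κ N κ i = bump κ N y i := fun i hi => by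
    rcases (Nat.lt_succ_iff.1 hi).lt_or_eq with hi | rfl
    · rw [bump_of_lt κ κ hi, bump_of_lt κ y hi]
    · simp
  have hsub := covalue_sub_of_agree (m := m) hq.mem_Ioo hagree
  have hshift := shiftN_bump (N := N) κ y 0
  have hshift' := shiftN_bump (N := N) κ κ 0
  rw [zero_add, shiftN_zero] at hshift hshift'
  rw [hshift, hshift'] at hsub
  rw [hq.value_cons_zero, value, value]
  linear_combination q * hsub

theorem dimH_survivors_le_dimH_Bset_inter_Ioo (hκ : κ ∈ minimalCodes m) (hlt : toLex κ < toLex e)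
    {r : ℝ} (hr : 0 < r) : dimH (covalue m q '' survivors m e) ≤
      dimH (Bset q⁻¹ ∩ Ioo (value m q (cons 0 κ)) (value m q (cons 0 κ) + r)) := by
  obtain ⟨n, hagree, hn⟩ := toLex_lt_toLex.1 hlt
  obtain ⟨l, hl⟩ := exists_forall_agree_abs_covalue_sub_lt m hq.mem_Ioo hr
  obtain ⟨N, hN, hκN⟩ := exists_mem_codes_lt hκ.1 (n + l)
  have hq₀ := hq.mem_Ioo.1
  rw [← dimH_image_const_add_mul (q * (value m q (bump κ N κ) +
    q ^ blockStart (bump κ N κ) (N + 1) * covalue m q κ))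
    (neg_ne_zero.2 (mul_pos hq₀ (pow_pos hq₀ (blockStart (bump κ N κ) (N + 1)))).ne'), image_image]
  refine dimH_mono (image_subset_iff.2 fun y hy => ?_)
  simp only [mem_preimage, ← hq.value_bump]
  have hbe : toLex (bump κ N y) < toLex e := bump_lt_of_le hagree hn (by omega)
  have hmin := bump_mem_minimalCodes hκ hκN hy hbe.le
  refine ⟨hq.value_cons_zero_mem_Bset hmin, hq.value_lt_value (cons_mem_codes m.zero_le hκ.1)
    (cons_mem_codes m.zero_le hmin.1) (cons_lt_cons_right 0 (toLex_lt_bump κ y N)), ?_⟩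
  have hclose := hl κ (bump κ N y) fun i hi => (bump_of_lt κ y (by omega)).symm
  rw [hq.value_cons_zero, hq.value_cons_zero, value, value]
  nlinarith [(abs_lt.1 hclose).2, hq.mem_Ioo.2]

theorem dimH_Bset_inter_Ioo {t r : ℝ} (ht : t ∈ Bset q⁻¹) (hr : 0 < r) :
    dimH (Bset q⁻¹ ∩ Ioo t (t + r)) = dimH (Kset q⁻¹ t) := by
  refine (dimH_mono ((inter_subset_inter_right _ Ioo_subset_Ioi_self).trans
    (hq.Bset_inter_Ioi_subset_Kset t))).antisymm ?_
  rw [hq.Bset_inv] at ht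
  obtain ⟨κ, hκ, rfl⟩ := ht
  rw [hq.dimH_Kset_value_cons_zero hκ.1]
  exact hq.dimH_survivors_le_of_forall_gt hκ fun e _ hlt =>
    hq.dimH_survivors_le_dimH_Bset_inter_Ioo hκ hlt hr

theorem dimH_Kset_pos_of_mem_Bset {t : ℝ} (ht : t ∈ Bset q⁻¹) : 0 < dimH (Kset q⁻¹ t) := by
  rw [hq.Bset_inv] at ht
  obtain ⟨κ, hκ, rfl⟩ := ht
  rw [hq.dimH_Kset_value_cons_zero hκ.1]
  exact hq.dimH_survivors_pos hκ

end IsMultinacciRoot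

end Multinacci

/-- For a multinacci `β ∈ (1,2)`,
`B_β = {t ∈ [0,1) : lim_{r→0⁺} dim_H(B_β ∩ (t,t+r)) = dim_H K_β(t) > 0}`. -/
theorem stmt_2 (β : ℝ) (hβ : β ∈ Set.Ioo (1 : ℝ) 2) (hmulti : IsMultinacci β) :
    Bset β = {t | t ∈ Set.Ico (0 : ℝ) 1 ∧
      Filter.Tendsto (fun r : ℝ => dimH (Bset β ∩ Set.Ioo t (t + r)))
        (nhdsWithin 0 (Set.Ioi 0)) (nhds (dimH (Kset β t))) ∧
      0 < dimH (Kset β t)} := by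
  obtain ⟨m, q, hq, rfl⟩ := Multinacci.exists_isMultinacciRoot hβ.1 hmulti
  ext t
  constructor
  · intro ht
    refine ⟨ht.1, tendsto_const_nhds.congr' ?_, hq.dimH_Kset_pos_of_mem_Bset ht⟩
    filter_upwards [self_mem_nhdsWithin] with r hr
    exact (hq.dimH_Bset_inter_Ioo ht hr).symm
  · rintro ⟨ht, hlim, hpos⟩
    by_contra htB
    exact hpos.ne' (Multinacci.dimH_Kset_eq_zero_of_tendsto ht htB hlim)
end
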